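/- arXiv:2112.12081 — 2 statements merged into one kernel-verified Lean document; each statement's English description precedes it below -/
import Mathlib

section
/- For every real q with 0 < q < 1, (1 − β⁵·R(q²)⁵) / (1 − α⁵·R(q²)⁵) = ∏_{n=1}^∞ ((1 + α·q^{2n} + q^{4n}) / (1 + β·q^{2n} + q^{4n}))⁵. -/
/-!
Put `x = q ^ (1/5)`. For a primitive fifth root of unity `z`, the Jacobi triple product
(`triple_product`) expands `∏ (1 - s^(2k)) (1 - z s^(2k)) (1 - z⁻¹ s^(2k))`, up to the factor
`1 - z⁻¹`, as a theta series in `s`. Splitting that series by the residue of the summation index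
modulo `5` and applying the triple product again to the pieces shows (`product_dissection`) that
the product equals `A(s⁵) - c s² B(s⁵)`, where `c = 1 + z + z⁻¹` and
`R(q²) = x² B(q) / A(q)` (`rrcf_sq_mul_prodA`).

Let `s` run over `x η^i`, `i < 5`, with `η` a primitive fifth root of unity, and multiply. Because
`s⁵ = q` is the same for all of these, the right-hand sides multiply to
`A(q)⁵ (1 - c⁵ R(q²)⁵)` (`hasProd_fiveFactor`). On the product side, the five factors with index
`k` prime to `5` multiply to `(1 - x^(10k))³`, whatever `z` is, and for `k = 5n` they give the fifth
power of `(1 - q^(2n)) (1 + (1 - c) q^(2n) + q^(4n))`. The values `c = β` and `c = α` arise from the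
two pairs of conjugate fifth roots of unity, and correspond to `1 - c = α` and `1 - c = β`; the
quotient of the two identities is the theorem.

The triple product itself is proved from Cauchy's finite version (`hasSum_finite_triple`) by
dominated convergence.
-/

open Real

/-- The Rogers–Ramanujan continued fraction value, via its product expansion,
for real `q` with `0 < q < 1`. -/
noncomputable def rrcf (q : ℝ) : ℝ :=
  q ^ ((1 : ℝ)/5) *
    ∏' n : ℕ,
      (1 - q ^ (5*(n+1) - 1)) * (1 - q ^ (5*(n+1) - 4)) /
      ((1 - q ^ (5*(n+1) - 2)) * (1 - q ^ (5*(n+1) - 3)))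

/-- Jacobi's second theta function `θ₂(z; q)` for real `z` and `0 < q < 1`. -/
noncomputable def theta2 (z q : ℝ) : ℝ :=
  2 * ∑' n : ℕ, q ^ (((n : ℝ) + 1/2)^2) * Real.cos ((2*(n : ℝ) + 1) * z)

/-- Ramanujan's function `f(-q) = ∑_{n ∈ ℤ} (-1)^n q^{n(3n-1)/2}`. -/
noncomputable def fneg (q : ℝ) : ℝ :=
  ∑' n : ℤ, (-1 : ℝ) ^ n * q ^ (n * (3*n - 1) / 2)

/-- The golden-ratio conjugate `α = (1 - √5)/2`. -/
noncomputable def alphaRR : ℝ := (1 - Real.sqrt 5) / 2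

/-- The golden ratio `β = (1 + √5)/2`. -/
noncomputable def betaRR : ℝ := (1 + Real.sqrt 5) / 2

open Filter Topology

/-! ### q-Pochhammer symbols -/

/-- The infinite `q`-Pochhammer symbol `(a; Q)_∞`, meaningful for `‖Q‖ < 1`. -/
noncomputable def qPoch (a Q : ℂ) : ℂ := ∏' k : ℕ, (1 - a * Q ^ k)

lemma qPoch_summable (a : ℂ) {Q : ℂ} (hQ : ‖Q‖ < 1) :
    Summable fun k : ℕ => ‖-(a * Q ^ k)‖ := by
  simpa [norm_mul, norm_pow] using (summable_geometric_of_lt_one (norm_nonneg Q) hQ).mul_left ‖a‖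

lemma qPoch_hasProd (a : ℂ) {Q : ℂ} (hQ : ‖Q‖ < 1) :
    HasProd (fun k : ℕ => 1 - a * Q ^ k) (qPoch a Q) := by
  have := (multipliable_one_add_of_summable (qPoch_summable a hQ)).hasProd
  simp only [← sub_eq_add_neg] at this
  exact this

lemma qPoch_ne_zero {a Q : ℂ} (hQ : ‖Q‖ < 1) (h : ∀ k : ℕ, a * Q ^ k ≠ 1) : qPoch a Q ≠ 0 := by
  have := tprod_one_add_ne_zero_of_summable (f := fun k : ℕ => -(a * Q ^ k))
    (fun k => by rw [← sub_eq_add_neg]; exact sub_ne_zero.mpr (h k).symm) (qPoch_summable a hQ)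
  simp only [← sub_eq_add_neg] at this
  exact this

lemma qPoch_shift (a : ℂ) {Q : ℂ} (hQ : ‖Q‖ < 1) : qPoch a Q = (1 - a) * qPoch (a * Q) Q := by
  have h : HasProd (fun k : ℕ => 1 - a * Q ^ (k + 1)) (qPoch (a * Q) Q) := by
    convert qPoch_hasProd (a * Q) hQ using 3 with k
    ring
  simpa using (qPoch_hasProd a hQ).unique h.zero_mul

/-- The finite `q`-Pochhammer symbol `(Q; Q)_n = (1 - Q) ⋯ (1 - Q ^ n)`. -/
noncomputable def qFact (Q : ℂ) (n : ℕ) : ℂ := ∏ k ∈ Finset.range n, (1 - Q * Q ^ k)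

/-- The function `n ↦ 1 / (Q; Q)_n` on `ℤ`, extended by `0` to negative `n`. With this convention
the recurrence `qFactInv_sub_one` holds for every integer `n`. -/
noncomputable def qFactInv (Q : ℂ) (n : ℤ) : ℂ := if 0 ≤ n then (qFact Q n.toNat)⁻¹ else 0

lemma one_sub_ne_zero_aux {Q : ℂ} (hQ : ‖Q‖ < 1) (k : ℕ) : 1 - Q * Q ^ k ≠ 0 := by
  rw [sub_ne_zero]
  intro h
  have h1 : ‖Q ^ (k + 1)‖ < 1 := by
    rw [norm_pow]; exact pow_lt_one₀ (norm_nonneg _) hQ (by simp)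
  rw [pow_succ', ← h] at h1
  simp at h1

lemma qFact_ne_zero {Q : ℂ} (hQ : ‖Q‖ < 1) (n : ℕ) : qFact Q n ≠ 0 :=
  Finset.prod_ne_zero_iff.mpr fun k _ => one_sub_ne_zero_aux hQ k

lemma qFactInv_sub_one {Q : ℂ} (hQ : ‖Q‖ < 1) (n : ℤ) :
    qFactInv Q (n - 1) = (1 - Q ^ n) * qFactInv Q n := by
  unfold qFactInv
  rcases lt_trichotomy n 0 with h | h | h
  · rw [if_neg (by omega), if_neg (by omega), mul_zero]
  · subst h; simp
  · obtain ⟨m, rfl⟩ : ∃ m : ℕ, n = m + 1 := ⟨(n - 1).toNat, by omega⟩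
    rw [if_pos (by omega), if_pos (by omega)]
    have h1 : ((m : ℤ) + 1 - 1).toNat = m := by omega
    have h2 : ((m : ℤ) + 1).toNat = m + 1 := by omega
    have h3 : Q ^ ((m : ℤ) + 1) = Q * Q ^ m := by
      rw [← pow_succ']; exact_mod_cast rfl
    rw [h1, h2, h3, qFact, qFact, Finset.prod_range_succ, mul_inv, mul_comm,
      inv_mul_cancel_right₀ (one_sub_ne_zero_aux hQ m)]

lemma qFact_tendsto {Q : ℂ} (hQ : ‖Q‖ < 1) :
    Tendsto (qFact Q) atTop (𝓝 (qPoch Q Q)) := (qPoch_hasProd Q hQ).tendsto_prod_nat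

lemma qPoch_self_ne_zero {Q : ℂ} (hQ : ‖Q‖ < 1) : qPoch Q Q ≠ 0 :=
  qPoch_ne_zero hQ fun k => (sub_ne_zero.mp (one_sub_ne_zero_aux hQ k)).symm

lemma qFactInv_tendsto {Q : ℂ} (hQ : ‖Q‖ < 1) :
    Tendsto (qFactInv Q) atTop (𝓝 (qPoch Q Q)⁻¹) := by
  have ht : Tendsto Int.toNat atTop atTop := tendsto_atTop.mpr fun b => by
    filter_upwards [eventually_ge_atTop (b : ℤ)] with n hn
    omega
  have h := ((qFact_tendsto hQ).inv₀ (qPoch_self_ne_zero hQ)).comp ht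
  refine h.congr' ?_
  filter_upwards [eventually_ge_atTop 0] with n hn
  simp [qFactInv, hn]

lemma qFact_bound {Q : ℂ} (hQ : ‖Q‖ < 1) : ∃ C, ∀ n, ‖qFact Q n‖ ≤ C := by
  obtain ⟨C, hC⟩ := (qFact_tendsto hQ).norm.bddAbove_range
  exact ⟨C, fun n => hC ⟨n, rfl⟩⟩

lemma qFactInv_bound {Q : ℂ} (hQ : ‖Q‖ < 1) : ∃ C, 0 ≤ C ∧ ∀ n, ‖qFactInv Q n‖ ≤ C := by
  obtain ⟨C, hC⟩ := ((qFact_tendsto hQ).inv₀ (qPoch_self_ne_zero hQ)).norm.bddAbove_range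
  have h0 : 0 ≤ C := (norm_nonneg _).trans (hC ⟨0, rfl⟩)
  refine ⟨C, h0, fun n => ?_⟩
  unfold qFactInv
  split_ifs
  · exact hC ⟨_, rfl⟩
  · simpa using h0

/-! ### The Jacobi triple product -/

/-- The general term of the theta series on the sum side of the triple product. Taking the base to
be `s ^ 2` makes the exponent `j * (j + 1)` rather than `j * (j + 1) / 2`, so that no division is
needed. -/
noncomputable def thetaTerm (z s : ℂ) (j : ℤ) : ℂ := (-1) ^ j * z ^ j * s ^ (j * (j + 1))

lemma thetaTerm_succ {z s : ℂ} (hz : z ≠ 0) (hs : s ≠ 0) (j : ℤ) :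
    thetaTerm z s (j + 1) = -z * (s ^ 2) ^ (j + 1) * thetaTerm z s j := by
  have h : (j + 1) * (j + 1 + 1) = 2 * (j + 1) + j * (j + 1) := by ring
  have h2 : (s ^ 2) ^ (j + 1) = s ^ (2 * (j + 1)) := by rw [zpow_mul]; rfl
  rw [thetaTerm, thetaTerm, h, zpow_add₀ hs, zpow_add_one₀ hz,
    zpow_add_one₀ (by norm_num : (-1 : ℂ) ≠ 0), h2]
  ring

lemma thetaTerm_summable {z s : ℂ} (hz : z ≠ 0) (hs : s ≠ 0) (hs1 : ‖s‖ < 1) :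
    Summable (thetaTerm z s) := by
  have hne : ∀ j, thetaTerm z s j ≠ 0 := fun j => by
    unfold thetaTerm
    have : (-1 : ℂ) ≠ 0 := by norm_num
    positivity
  have hsq : ‖s ^ 2‖ < 1 := by rw [norm_pow]; exact pow_lt_one₀ (norm_nonneg _) hs1 (by simp)
  have ht : Tendsto (fun n : ℕ => (s ^ 2) ^ n) atTop (𝓝 0) :=
    tendsto_pow_atTop_nhds_zero_of_norm_lt_one hsq
  refine Summable.of_nat_of_neg ?_ ?_
  · refine summable_of_ratio_test_tendsto_lt_one zero_lt_one
      (Eventually.of_forall fun n => hne _) ?_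
    have h0 : Tendsto (fun n : ℕ => ‖-z * (s ^ 2) ^ (n + 1)‖) atTop (𝓝 0) := by
      simpa using ((ht.comp (tendsto_add_atTop_nat 1)).const_mul (-z)).norm
    refine h0.congr fun n => ?_
    rw [← norm_div]
    congr 1
    push_cast
    rw [thetaTerm_succ hz hs, mul_div_cancel_right₀ _ (hne _)]
    exact_mod_cast rfl
  · refine summable_of_ratio_test_tendsto_lt_one zero_lt_one
      (Eventually.of_forall fun n => hne _) ?_
    have h0 : Tendsto (fun n : ℕ => ‖-z⁻¹ * (s ^ 2) ^ n‖) atTop (𝓝 0) := by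
      simpa using (ht.const_mul (-z⁻¹)).norm
    refine h0.congr fun n => ?_
    rw [← norm_div]
    congr 1
    have h := thetaTerm_succ hz hs (-((n + 1 : ℕ) : ℤ))
    rw [show -((n + 1 : ℕ) : ℤ) + 1 = -(n : ℤ) by push_cast; ring] at h
    rw [h, zpow_neg, zpow_natCast]
    have := hne (-((n + 1 : ℕ) : ℤ))
    field_simp

/-- Cauchy's finite form of the triple product, with `Q = s ^ 2`:
`∏_{k < N} (1 - z Q^(k+1)) (1 - z⁻¹ Q^k) = ∑_j [2N, N+j]_Q (-1)^j z^j s^(j(j+1))`.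
Since `qFactInv` vanishes at negative arguments, the sum over all of `ℤ` is finite, and the
induction on `N` needs no separate treatment of the ends `j = ±N`. -/
lemma hasSum_finite_triple {z s : ℂ} (hz : z ≠ 0) (hs : s ≠ 0) (hs1 : ‖s ^ 2‖ < 1) (N : ℕ) :
    HasSum (fun j : ℤ => qFact (s ^ 2) (2 * N) * qFactInv (s ^ 2) (N + j) *
        qFactInv (s ^ 2) (N - j) * thetaTerm z s j)
      (∏ k ∈ Finset.range N, ((1 - z * s ^ 2 * (s ^ 2) ^ k) * (1 - z⁻¹ * (s ^ 2) ^ k))) := by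
  set Q := s ^ 2 with hQ
  have hQ0 : Q ≠ 0 := pow_ne_zero _ hs
  induction N with
  | zero =>
    have : HasSum (fun j : ℤ => qFact Q (2 * 0) * qFactInv Q ((0 : ℕ) + j) *
        qFactInv Q ((0 : ℕ) - j) * thetaTerm z s j) _ := hasSum_single 0 (by
      intro j hj
      rcases lt_or_gt_of_ne hj with h | h
      · rw [qFactInv, if_neg (by omega)]; ring
      · rw [qFactInv, qFactInv, if_neg (by omega : ¬ 0 ≤ ((0 : ℕ) : ℤ) - j)]; ring)
    convert this using 1
    simp [qFact, qFactInv, thetaTerm]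
  | succ N ih =>
    have hp := (Equiv.addRight (-1 : ℤ)).hasSum_iff.mpr ih
    have hm := (Equiv.addRight (1 : ℤ)).hasSum_iff.mpr ih
    have H := ((ih.mul_left (1 + Q ^ (2 * N + 1))).sub (hp.mul_left (z * Q ^ (N + 1)))).sub
      (hm.mul_left (z⁻¹ * Q ^ N))
    rw [Finset.prod_range_succ]
    convert! H using 1
    · funext j
      simp only [Function.comp, Equiv.coe_addRight]
      set a := Q ^ ((N : ℤ) + 1 + j) with ha
      set b := Q ^ ((N : ℤ) + 1 - j) with hb
      have hab : a * b = Q ^ (2 * N + 2) := by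
        rw [ha, hb, ← zpow_add₀ hQ0, ← zpow_natCast]; congr 1; push_cast; ring
      set r := qFactInv Q ((N : ℤ) + 1 + j) with hr
      set t := qFactInv Q ((N : ℤ) + 1 - j) with ht
      have e1 : qFactInv Q (N + j) = (1 - a) * r := by
        rw [ha, hr, ← qFactInv_sub_one hs1]; congr 1; ring
      have e2 : qFactInv Q (N - j) = (1 - b) * t := by
        rw [hb, ht, ← qFactInv_sub_one hs1]; congr 1; ring
      have e3 : qFactInv Q (N + (j + -1)) = (1 - a * Q⁻¹) * ((1 - a) * r) := by
        rw [← e1, ha, ← zpow_sub_one₀ hQ0]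
        have := qFactInv_sub_one hs1 (N + j)
        rw [show (N : ℤ) + (j + -1) = N + j - 1 by ring, this]; congr 3; ring
      have e4 : qFactInv Q (N - (j + 1)) = (1 - b * Q⁻¹) * ((1 - b) * t) := by
        rw [← e2, hb, ← zpow_sub_one₀ hQ0]
        have := qFactInv_sub_one hs1 (N - j)
        rw [show (N : ℤ) - (j + 1) = N - j - 1 by ring, this]; congr 3; ring
      have e5 : qFactInv Q (N - (j + -1)) = t := by rw [ht]; congr 1; ring
      have e6 : qFactInv Q (N + (j + 1)) = r := by rw [hr]; congr 1; ring
      have e7 : qFactInv Q ((N + 1 : ℕ) + j) = r := by rw [hr]; push_cast; rfl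
      have e8 : qFactInv Q ((N + 1 : ℕ) - j) = t := by rw [ht]; push_cast; rfl
      have e9 : qFact Q (2 * (N + 1)) =
          qFact Q (2 * N) * (1 - a * b * Q⁻¹) * (1 - a * b) := by
        rw [hab, show 2 * (N + 1) = 2 * N + 1 + 1 by ring, qFact, qFact, Finset.prod_range_succ,
          Finset.prod_range_succ]
        field_simp
        ring
      have t1 : z * Q ^ (N + 1) * thetaTerm z s (j + -1) = - b * thetaTerm z s j := by
        have := thetaTerm_succ hz hs (j + -1)
        rw [neg_add_cancel_right, ← hQ] at this
        rw [this, hb, show (N : ℤ) + 1 - j = (N + 1 : ℕ) - j by push_cast; ring, zpow_sub₀ hQ0,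
          zpow_natCast]
        field_simp
      have t2 : z⁻¹ * Q ^ N * thetaTerm z s (j + 1) = - a * thetaTerm z s j := by
        rw [thetaTerm_succ hz hs, ← hQ, ha,
          show (N : ℤ) + 1 + j = (N : ℕ) + (j + 1) by ring, zpow_add₀ hQ0 (N : ℕ), zpow_natCast]
        field_simp
      have hQQ : Q ^ (2 * N + 1) = a * b * Q⁻¹ := by rw [hab]; field_simp; ring
      rw [e1, e2, e3, e4, e5, e6, e7, e8, e9, hQQ]
      linear_combination (qFact Q (2 * N) * ((1 - a * Q⁻¹) * ((1 - a) * r)) * t) * t1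
        + (qFact Q (2 * N) * r * ((1 - b * Q⁻¹) * ((1 - b) * t))) * t2
    · have hzz : z * z⁻¹ = 1 := mul_inv_cancel₀ hz
      linear_combination (Q * Q ^ N * Q ^ N *
        ∏ k ∈ Finset.range N, (1 - z * Q * Q ^ k) * (1 - z⁻¹ * Q ^ k)) * hzz

/-- The Jacobi triple product identity, obtained from `hasSum_finite_triple` by letting `N → ∞`
under a dominating series. -/
theorem triple_product {z s : ℂ} (hz : z ≠ 0) (hs : s ≠ 0) (hs1 : ‖s‖ < 1) :
    ∑' j, thetaTerm z s j = qPoch (s ^ 2) (s ^ 2) * qPoch (z * s ^ 2) (s ^ 2) *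
      qPoch z⁻¹ (s ^ 2) := by
  have hsq : ‖s ^ 2‖ < 1 := by rw [norm_pow]; exact pow_lt_one₀ (norm_nonneg _) hs1 (by simp)
  set Q := s ^ 2 with hQ
  obtain ⟨C, hC⟩ := qFact_bound hsq
  obtain ⟨D, hD0, hD⟩ := qFactInv_bound hsq
  have hlim : Tendsto (fun N : ℕ => ∑' j : ℤ, qFact Q (2 * N) * qFactInv Q (N + j) *
        qFactInv Q (N - j) * thetaTerm z s j) atTop
      (𝓝 (∑' j : ℤ, qPoch Q Q * (qPoch Q Q)⁻¹ * (qPoch Q Q)⁻¹ * thetaTerm z s j)) := by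
    refine tendsto_tsum_of_dominated_convergence
      (bound := fun j => C * D * D * ‖thetaTerm z s j‖)
      ((thetaTerm_summable hz hs hs1).norm.mul_left _) (fun j => ?_) (Eventually.of_forall ?_)
    · refine Tendsto.mul_const _ (Tendsto.mul (Tendsto.mul ?_ ?_) ?_)
      · exact (qFact_tendsto hsq).comp (tendsto_id.const_mul_atTop' two_pos)
      · exact (qFactInv_tendsto hsq).comp
          (tendsto_atTop_add_const_right _ _ tendsto_natCast_atTop_atTop)
      · exact (qFactInv_tendsto hsq).comp
          (tendsto_atTop_add_const_right _ (-j) tendsto_natCast_atTop_atTop)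
    · intro N j
      have hC0 : 0 ≤ C := (norm_nonneg _).trans (hC 0)
      rw [norm_mul, norm_mul, norm_mul]
      gcongr
      · exact hC _
      · exact hD _
      · exact hD _
  have hlim2 : Tendsto (fun N : ℕ => ∑' j : ℤ, qFact Q (2 * N) * qFactInv Q (N + j) *
        qFactInv Q (N - j) * thetaTerm z s j) atTop
      (𝓝 (qPoch (z * Q) Q * qPoch z⁻¹ Q)) := by
    refine (((qPoch_hasProd (z * Q) hsq).mul (qPoch_hasProd z⁻¹ hsq)).tendsto_prod_nat).congr ?_
    intro N
    exact (hasSum_finite_triple hz hs hsq N).tsum_eq.symm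
  have h := tendsto_nhds_unique hlim2 hlim
  have h0 := qPoch_self_ne_zero hsq
  rw [mul_inv_cancel₀ h0, tsum_mul_left, one_mul] at h
  rw [mul_assoc, h, mul_inv_cancel_left₀ h0]

/-! ### The 5-dissection -/

lemma tsum_mod_five {f : ℤ → ℂ} (hf : Summable f) :
    ∑' n, f n = ∑' m : ℤ, f (5 * m) + ∑' m : ℤ, f (5 * m + 1) + ∑' m : ℤ, f (5 * m + 2) +
      ∑' m : ℤ, f (5 * m + 3) + ∑' m : ℤ, f (5 * m + 4) := by
  have hs : Summable fun p => f ((Int.divModEquiv 5).symm p) :=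
    (Int.divModEquiv 5).symm.summable_iff.mpr hf
  have hr : ∀ r : ℤ, Summable fun m : ℤ => f (5 * m + r) := fun r =>
    hf.comp_injective (i := fun m : ℤ => 5 * m + r) fun a b h => by
      have : 5 * a + r = 5 * b + r := h
      omega
  rw [← (Int.divModEquiv 5).symm.tsum_eq f, hs.tsum_prod]
  have h : ∀ m : ℤ, ∑' r : Fin 5, f ((Int.divModEquiv 5).symm (m, r)) =
      f (5 * m + 0) + f (5 * m + 1) + f (5 * m + 2) + f (5 * m + 3) + f (5 * m + 4) := fun m => by
    rw [tsum_fintype, Fin.sum_univ_five]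
    simp [Int.divModEquiv, mul_comm]
  simp_rw [h]
  rw [((((hr 0).add (hr 1)).add (hr 2)).add (hr 3)).tsum_add (hr 4),
    (((hr 0).add (hr 1)).add (hr 2)).tsum_add (hr 3), ((hr 0).add (hr 1)).tsum_add (hr 2),
    (hr 0).tsum_add (hr 1)]
  simp

/-- Sums over `ℤ` are invariant under `m ↦ -1 - m`. -/
lemma tsum_reflect (f : ℤ → ℂ) : ∑' m, f (-m - 1) = ∑' m, f m := by
  have := (Equiv.subLeft (-1 : ℤ)).tsum_eq f
  rw [← this]
  refine tsum_congr fun m => ?_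
  rw [Equiv.subLeft_apply]
  congr 1
  ring

lemma zpow_five_mul {z : ℂ} (hz5 : z ^ 5 = 1) (m : ℤ) : z ^ (5 * m) = 1 := by
  rw [zpow_mul]
  have : z ^ (5 : ℤ) = 1 := by exact_mod_cast hz5
  rw [this, one_zpow]

lemma neg_one_zpow_five_mul (m : ℤ) : (-1 : ℂ) ^ (5 * m) = (-1) ^ m := by
  rw [zpow_mul]
  norm_num

/-- The 5-dissection of the theta series at a fifth root of unity `z`. The residue classes `0, 4`
and `1, 3` modulo `5` are exchanged by `j ↦ -1 - j` and give two series in `s ^ 5` (up to a power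
of `s`); the class `2` is mapped to itself with a change of sign, so it contributes `0`. -/
lemma theta_dissection {z s : ℂ} (hz5 : z ^ 5 = 1) (hs : s ≠ 0) (hs1 : ‖s‖ < 1) :
    ∑' j, thetaTerm z s j = (1 - z ^ 4) * ∑' m, thetaTerm (s ^ 20)⁻¹ (s ^ 25) m +
      (z ^ 3 - z) * (s ^ 2 * ∑' m, thetaTerm (s ^ 10)⁻¹ (s ^ 25) m) := by
  have hz : z ≠ 0 := by rintro rfl; norm_num at hz5
  have hn : (-1 : ℂ) ≠ 0 := by norm_num
  have zp (m : ℤ) (k : ℕ) : z ^ (5 * m + k) = z ^ k := by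
    rw [zpow_add₀ hz, zpow_five_mul hz5, one_mul, zpow_natCast]
  have np (m : ℤ) (k : ℕ) : (-1 : ℂ) ^ (5 * m + k) = (-1) ^ m * (-1) ^ k := by
    rw [zpow_add₀ hn, neg_one_zpow_five_mul, zpow_natCast]
  have nr (m : ℤ) : (-1 : ℂ) ^ (-m - 1) = -(-1) ^ m := by
    rw [zpow_sub_one₀ hn, zpow_neg, ← inv_zpow]; norm_num
  have term (m : ℤ) (k : ℕ) : thetaTerm z s (5 * m + k) =
      (-1) ^ k * z ^ k * ((-1) ^ m * s ^ ((5 * m + k) * (5 * m + k + 1))) := by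
    rw [thetaTerm, zp, np]; ring
  have eA (m : ℤ) : thetaTerm (s ^ 20)⁻¹ (s ^ 25) m = (-1) ^ m * s ^ (5 * m * (5 * m + 1)) := by
    rw [thetaTerm, mul_assoc, ← zpow_natCast, ← zpow_natCast, ← zpow_neg, ← zpow_mul, ← zpow_mul,
      ← zpow_add₀ hs]
    congr 2
    push_cast; ring
  have eB (m : ℤ) : s ^ 2 * thetaTerm (s ^ 10)⁻¹ (s ^ 25) m =
      (-1) ^ m * s ^ ((5 * m + 1) * (5 * m + 2)) := by
    rw [thetaTerm, mul_assoc, ← zpow_natCast, ← zpow_natCast, ← zpow_natCast, ← zpow_neg,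
      ← zpow_mul, ← zpow_mul, ← zpow_add₀ hs, mul_left_comm, ← zpow_add₀ hs]
    congr 2
    push_cast; ring
  have s0 : ∑' m : ℤ, thetaTerm z s (5 * m) = ∑' m, thetaTerm (s ^ 20)⁻¹ (s ^ 25) m :=
    tsum_congr fun m => by simpa [eA] using term m 0
  have s1 : ∑' m : ℤ, thetaTerm z s (5 * m + 1) =
      -z * (s ^ 2 * ∑' m, thetaTerm (s ^ 10)⁻¹ (s ^ 25) m) := by
    rw [← tsum_mul_left, ← tsum_mul_left]
    refine tsum_congr fun m => ?_
    have := term m 1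
    push_cast at this
    rw [this, eB]; ring_nf
  have s3 : ∑' m : ℤ, thetaTerm z s (5 * m + 3) =
      z ^ 3 * (s ^ 2 * ∑' m, thetaTerm (s ^ 10)⁻¹ (s ^ 25) m) := by
    rw [← tsum_mul_left, ← tsum_mul_left, ← tsum_reflect]
    refine tsum_congr fun m => ?_
    have := term (-m - 1) 3
    push_cast at this
    rw [this, eB, nr]; ring_nf
  have s4 : ∑' m : ℤ, thetaTerm z s (5 * m + 4) =
      -z ^ 4 * ∑' m, thetaTerm (s ^ 20)⁻¹ (s ^ 25) m := by
    rw [← tsum_mul_left, ← tsum_reflect]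
    refine tsum_congr fun m => ?_
    have := term (-m - 1) 4
    push_cast at this
    rw [this, eA, nr]; ring_nf
  have s2 : ∑' m : ℤ, thetaTerm z s (5 * m + 2) = 0 := by
    have h : ∑' m : ℤ, thetaTerm z s (5 * m + 2) = -∑' m : ℤ, thetaTerm z s (5 * m + 2) := by
      conv_lhs => rw [← tsum_reflect]
      rw [← tsum_neg]
      refine tsum_congr fun m => ?_
      have h1 := term (-m - 1) 2
      have h2 := term m 2
      push_cast at h1 h2
      rw [h1, h2, nr]; ring_nf
    exact self_eq_neg.mp h
  rw [tsum_mod_five (thetaTerm_summable hz hs hs1), s0, s1, s2, s3, s4]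
  ring

/-- The product `∏ (1 - Q^(5n)) (1 - Q^(5n-2)) (1 - Q^(5n-3))` over `n ≥ 1` with `Q = y ^ 2`, whose
last two factors form the denominator of the Rogers–Ramanujan product at `y ^ 2`. -/
noncomputable def prodA (y : ℂ) : ℂ :=
  qPoch (y ^ 10) (y ^ 10) * qPoch (y ^ 6) (y ^ 10) * qPoch (y ^ 4) (y ^ 10)

/-- The product `∏ (1 - Q^(5n)) (1 - Q^(5n-1)) (1 - Q^(5n-4))` over `n ≥ 1` with `Q = y ^ 2`, whose
last two factors form the numerator of the Rogers–Ramanujan product at `y ^ 2`. -/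
noncomputable def prodB (y : ℂ) : ℂ :=
  qPoch (y ^ 10) (y ^ 10) * qPoch (y ^ 8) (y ^ 10) * qPoch (y ^ 2) (y ^ 10)

/-- The dissection in product form. The hypothesis `hc` says `c = 1 + z + z⁻¹`, so `c` is the
golden ratio or its conjugate for `z` a primitive fifth root of unity. -/
lemma product_dissection {z s c : ℂ} (hz1 : z ≠ 1) (hz5 : z ^ 5 = 1) (hc : z ^ 2 + 1 = (c - 1) * z)
    (hs : s ≠ 0) (hs1 : ‖s‖ < 1) :
    HasProd (fun k : ℕ => (1 - (s ^ 2) ^ (k + 1)) * (1 - z * (s ^ 2) ^ (k + 1)) *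
      (1 - z⁻¹ * (s ^ 2) ^ (k + 1))) (prodA (s ^ 5) - c * s ^ 2 * prodB (s ^ 5)) := by
  have hz : z ≠ 0 := by rintro rfl; norm_num at hz5
  have hsq : ‖s ^ 2‖ < 1 := by rw [norm_pow]; exact pow_lt_one₀ (norm_nonneg _) hs1 (by simp)
  have h25 : ‖s ^ 25‖ < 1 := by rw [norm_pow]; exact pow_lt_one₀ (norm_nonneg _) hs1 (by simp)
  have hA : ∑' m, thetaTerm (s ^ 20)⁻¹ (s ^ 25) m = prodA (s ^ 5) := by
    rw [triple_product (by positivity) (by positivity) h25, prodA, inv_inv,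
      show (s ^ 20)⁻¹ * (s ^ 25) ^ 2 = s ^ 30 by field_simp]
    ring_nf
  have hB : ∑' m, thetaTerm (s ^ 10)⁻¹ (s ^ 25) m = prodB (s ^ 5) := by
    rw [triple_product (by positivity) (by positivity) h25, prodB, inv_inv,
      show (s ^ 10)⁻¹ * (s ^ 25) ^ 2 = s ^ 40 by field_simp]
    ring_nf
  have hT := triple_product hz hs hs1
  rw [theta_dissection hz5 hs hs1, hA, hB, qPoch_shift z⁻¹ hsq] at hT
  have hi : z⁻¹ = z ^ 4 := by
    exact inv_eq_of_mul_eq_one_right (by rw [← hz5]; ring)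
  have h1 : 1 - z⁻¹ ≠ 0 := by
    rw [sub_ne_zero]; intro h; exact hz1 (inv_eq_one.mp h.symm)
  have key : prodA (s ^ 5) - c * s ^ 2 * prodB (s ^ 5) = qPoch (s ^ 2) (s ^ 2) *
      qPoch (z * s ^ 2) (s ^ 2) * qPoch (z⁻¹ * s ^ 2) (s ^ 2) := by
    apply mul_left_cancel₀ h1
    rw [← hi] at hT
    have hc2 : (1 - z⁻¹) * c = z - z ^ 3 := by
      have : c = z + z⁻¹ + 1 := by field_simp; linear_combination -hc
      rw [this, hi]
      linear_combination (-1 - z ^ 3) * hz5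
    linear_combination hT - s ^ 2 * prodB (s ^ 5) * hc2
  rw [key]
  convert! ((qPoch_hasProd (s ^ 2) hsq).mul (qPoch_hasProd (z * s ^ 2) hsq)).mul
    (qPoch_hasProd (z⁻¹ * s ^ 2) hsq) using 2 with k
  ring

/-! ### The product over the fifth roots of unity -/

lemma prod_five_roots {w : ℂ} (hw : 1 + w + w ^ 2 + w ^ 3 + w ^ 4 = 0) (x y : ℂ) :
    ∏ i ∈ Finset.range 5, (x - w ^ i * y) = x ^ 5 - y ^ 5 := by
  simp only [Finset.prod_range_succ, Finset.prod_range_zero]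
  linear_combination (-x ^ 4 * y + (w ^ 3 + w) * x ^ 3 * y ^ 2 - (w ^ 5 + w ^ 3) * x ^ 2 * y ^ 3 +
    w ^ 6 * x * y ^ 4 + (1 - w + w ^ 5 - w ^ 6) * y ^ 5) * hw

lemma geom_five_eq_zero {w : ℂ} (hw5 : w ^ 5 = 1) (hw1 : w ≠ 1) :
    1 + w + w ^ 2 + w ^ 3 + w ^ 4 = 0 := by
  apply mul_left_cancel₀ (sub_ne_zero.mpr hw1)
  linear_combination hw5

/-- The `k`-th factor of the product over the five bases `x * η ^ i`, `i < 5`, of the left-hand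
side of `product_dissection`. -/
noncomputable def fiveFactor (z x η : ℂ) (k : ℕ) : ℂ :=
  ∏ i ∈ Finset.range 5, ((1 - ((x * η ^ i) ^ 2) ^ (k + 1)) *
    (1 - z * ((x * η ^ i) ^ 2) ^ (k + 1)) * (1 - z⁻¹ * ((x * η ^ i) ^ 2) ^ (k + 1)))

lemma pow_two_mul_ne_one {η : ℂ} (h5 : η ^ 5 = 1) (h1 : η ≠ 1) {m : ℕ} (hm : ¬ 5 ∣ m) :
    η ^ (2 * m) ≠ 1 := by
  have : Fact (Nat.Prime 5) := ⟨by norm_num⟩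
  intro h
  have := orderOf_dvd_iff_pow_eq_one.mpr h
  rw [orderOf_eq_prime h5 h1] at this
  omega

/-- Multiplying `product_dissection` over the five bases `s = x * η ^ i` turns
`A - c * s ^ 2 * B` into a difference of fifth powers, since `A` and `B` depend only on `s ^ 5`. -/
lemma hasProd_fiveFactor {z c x η : ℂ} (hz1 : z ≠ 1) (hz5 : z ^ 5 = 1)
    (hc : z ^ 2 + 1 = (c - 1) * z) (hη5 : η ^ 5 = 1) (hη1 : η ≠ 1) (hx : x ≠ 0) (hx1 : ‖x‖ < 1) :
    HasProd (fiveFactor z x η) (prodA (x ^ 5) ^ 5 - (c * x ^ 2 * prodB (x ^ 5)) ^ 5) := by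
  have hη0 : η ≠ 0 := by rintro rfl; norm_num at hη5
  have hηn : ‖η‖ = 1 := Complex.norm_eq_one_of_pow_eq_one hη5 (by norm_num)
  have h (i : ℕ) := product_dissection hz1 hz5 hc (s := x * η ^ i) (by positivity)
    (by rw [norm_mul, norm_pow, hηn]; simpa using hx1)
  have hw := geom_five_eq_zero (w := η ^ 2) (by rw [← pow_mul, mul_comm, pow_mul, hη5, one_pow])
    (pow_two_mul_ne_one hη5 hη1 (m := 1) (by norm_num))
  rw [← prod_five_roots hw, show fiveFactor z x η = fun k => fiveFactor z x η k from rfl]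
  simp only [fiveFactor]
  refine hasProd_prod fun i _ => ?_
  have hy : (x * η ^ i) ^ 5 = x ^ 5 := by
    rw [mul_pow, ← pow_mul, mul_comm i, pow_mul, hη5, one_pow, mul_one]
  have he : prodA (x ^ 5) - (η ^ 2) ^ i * (c * x ^ 2 * prodB (x ^ 5)) =
      prodA ((x * η ^ i) ^ 5) - c * (x * η ^ i) ^ 2 * prodB ((x * η ^ i) ^ 5) := by
    rw [hy]; ring
  rw [he]
  exact h i

lemma fiveFactor_of_dvd {z x η : ℂ} (hη5 : η ^ 5 = 1) {k : ℕ} (hk : 5 ∣ k + 1) :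
    fiveFactor z x η k = ((1 - x ^ (2 * (k + 1))) * (1 - z * x ^ (2 * (k + 1))) *
      (1 - z⁻¹ * x ^ (2 * (k + 1)))) ^ 5 := by
  obtain ⟨m, hm⟩ := hk
  have h (i : ℕ) : ((x * η ^ i) ^ 2) ^ (k + 1) = x ^ (2 * (k + 1)) := by
    rw [← pow_mul, mul_pow, ← pow_mul, hm, show i * (2 * (5 * m)) = 5 * (2 * m * i) by ring,
      pow_mul η, hη5, one_pow, mul_one]
  simp [fiveFactor, h]

/-- For `5 ∤ k + 1` the factor does not depend on `z`; these factors cancel in the quotient of the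
products for two different fifth roots of unity. -/
lemma fiveFactor_of_not_dvd {z x η : ℂ} (hz5 : z ^ 5 = 1) (hη5 : η ^ 5 = 1) (hη1 : η ≠ 1) {k : ℕ}
    (hk : ¬ 5 ∣ k + 1) : fiveFactor z x η k = (1 - x ^ (10 * (k + 1))) ^ 3 := by
  have hw := geom_five_eq_zero (w := η ^ (2 * (k + 1)))
    (by rw [← pow_mul, mul_comm, pow_mul, hη5, one_pow]) (pow_two_mul_ne_one hη5 hη1 hk)
  have h (i : ℕ) : ((x * η ^ i) ^ 2) ^ (k + 1) = (η ^ (2 * (k + 1))) ^ i * x ^ (2 * (k + 1)) := by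
    ring
  have hzi : z⁻¹ ^ 5 = 1 := by rw [inv_pow, hz5, inv_one]
  simp only [fiveFactor, h, Finset.prod_mul_distrib]
  simp only [mul_left_comm z, mul_left_comm z⁻¹]
  rw [prod_five_roots hw, prod_five_roots hw, prod_five_roots hw, mul_pow z, mul_pow z⁻¹, hz5, hzi]
  ring

/-! ### The Rogers–Ramanujan product and the golden ratio -/

lemma ofReal_tprod (f : ℕ → ℝ) : ((∏' n, f n : ℝ) : ℂ) = ∏' n, (f n : ℂ) :=
  Complex.isUniformEmbedding_ofReal.isClosedEmbedding.map_tprod f (g := Complex.ofRealHom)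

lemma real_pow_mul_ne_one {q : ℝ} (hq0 : 0 < q) (hq1 : q < 1) {m : ℕ} (hm : m ≠ 0) (k : ℕ) :
    (q : ℂ) ^ m * ((q : ℂ) ^ 10) ^ k ≠ 1 := by
  have h : q ^ (m + 10 * k) < 1 := pow_lt_one₀ hq0.le hq1 (by omega)
  rw [← pow_mul, ← pow_add]
  exact_mod_cast h.ne

lemma prodA_ne_zero {q : ℝ} (hq0 : 0 < q) (hq1 : q < 1) : prodA q ≠ 0 := by
  have hn : ‖(q : ℂ) ^ 10‖ < 1 := by
    rw [norm_pow, Complex.norm_real, Real.norm_of_nonneg hq0.le]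
    exact pow_lt_one₀ hq0.le hq1 (by norm_num)
  have h (m : ℕ) (hm : m ≠ 0) := qPoch_ne_zero hn (real_pow_mul_ne_one hq0 hq1 hm)
  exact mul_ne_zero (mul_ne_zero (h _ (by norm_num)) (h _ (by norm_num))) (h _ (by norm_num))

/-- `R(q²) = q^(2/5) * B / A`. -/
lemma rrcf_sq_mul_prodA {q : ℝ} (hq0 : 0 < q) (hq1 : q < 1) :
    (rrcf (q ^ 2) : ℂ) * prodA q = ((q ^ ((1 : ℝ) / 5) : ℝ) : ℂ) ^ 2 * prodB q := by
  have hn : ‖(q : ℂ) ^ 10‖ < 1 := by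
    rw [norm_pow, Complex.norm_real, Real.norm_of_nonneg hq0.le]
    exact pow_lt_one₀ hq0.le hq1 (by norm_num)
  have h (m : ℕ) (hm : m ≠ 0) := qPoch_ne_zero hn (real_pow_mul_ne_one hq0 hq1 hm)
  have hp (m : ℕ) := qPoch_hasProd ((q : ℂ) ^ m) hn
  have H := ((hp 8).mul (hp 2)).div₀ ((hp 6).mul (hp 4))
    (mul_ne_zero (h 6 (by norm_num)) (h 4 (by norm_num)))
  have hr : (q ^ 2) ^ ((1 : ℝ) / 5) = (q ^ ((1 : ℝ) / 5)) ^ 2 := by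
    rw [← Real.rpow_natCast, ← Real.rpow_natCast, ← Real.rpow_mul hq0.le, ← Real.rpow_mul hq0.le,
      mul_comm]
  have hR : (rrcf (q ^ 2) : ℂ) = ((q ^ ((1 : ℝ) / 5) : ℝ) : ℂ) ^ 2 *
      (qPoch ((q : ℂ) ^ 8) ((q : ℂ) ^ 10) * qPoch ((q : ℂ) ^ 2) ((q : ℂ) ^ 10) /
        (qPoch ((q : ℂ) ^ 6) ((q : ℂ) ^ 10) * qPoch ((q : ℂ) ^ 4) ((q : ℂ) ^ 10))) := by
    rw [rrcf, hr, Complex.ofReal_mul, ofReal_tprod, Complex.ofReal_pow, ← H.tprod_eq]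
    congr 1
    refine tprod_congr fun n => ?_
    rw [show 5 * (n + 1) - 1 = 5 * n + 4 by omega, show 5 * (n + 1) - 2 = 5 * n + 3 by omega,
      show 5 * (n + 1) - 3 = 5 * n + 2 by omega, show 5 * (n + 1) - 4 = 5 * n + 1 by omega]
    push_cast
    ring_nf
  have h6 := h 6 (by norm_num)
  have h4 := h 4 (by norm_num)
  rw [hR, prodA, prodB]
  field_simp

lemma rrcf_nonneg {q : ℝ} (hq0 : 0 ≤ q) (hq1 : q ≤ 1) : 0 ≤ rrcf q := by
  have h (m : ℕ) : 0 ≤ 1 - q ^ m := sub_nonneg.mpr (pow_le_one₀ hq0 hq1)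
  refine mul_nonneg (Real.rpow_nonneg hq0 _) ?_
  by_cases hm : Multipliable fun n : ℕ =>
      (1 - q ^ (5*(n+1) - 1)) * (1 - q ^ (5*(n+1) - 4)) /
      ((1 - q ^ (5*(n+1) - 2)) * (1 - q ^ (5*(n+1) - 3)))
  · exact ge_of_tendsto' hm.hasProd.tendsto_prod_nat fun n => Finset.prod_nonneg fun k _ =>
      div_nonneg (mul_nonneg (h _) (h _)) (mul_nonneg (h _) (h _))
  -- A product that is not multipliable has the default value `1`.
  · rw [tprod_eq_one_of_not_multipliable hm]
    exact zero_le_one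

/-- A primitive fifth root of unity `η` with `η + η⁻¹ = -β`; its square then satisfies
`η² + η⁻² = -α`. -/
lemma exists_golden_root : ∃ η : ℂ, η ^ 2 + betaRR * η + 1 = 0 := by
  obtain ⟨d, hd⟩ := IsAlgClosed.exists_eq_mul_self (discrim (1 : ℂ) betaRR 1)
  obtain ⟨η, hη⟩ := exists_quadratic_eq_zero one_ne_zero ⟨d, hd⟩
  exact ⟨η, by linear_combination hη⟩

lemma alphaRR_add_betaRR : alphaRR + betaRR = 1 := by
  unfold alphaRR betaRR; ring

lemma alphaRR_mul_betaRR : alphaRR * betaRR = -1 := by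
  have := Real.sq_sqrt (show (0 : ℝ) ≤ 5 by norm_num)
  unfold alphaRR betaRR
  linear_combination -this / 4

/-! ### The quotient of the two products -/

theorem rrcf_fifth_ratio_product (q : ℝ) (hq0 : 0 < q) (hq1 : q < 1) :
    (1 - betaRR^5 * (rrcf (q^2))^5) / (1 - alphaRR^5 * (rrcf (q^2))^5) =
      ∏' n : ℕ,
        ((1 + alphaRR * q ^ (2*(n + 1)) + q ^ (4*(n + 1))) /
         (1 + betaRR * q ^ (2*(n + 1)) + q ^ (4*(n + 1))))^5 := by
  have hA := prodA_ne_zero hq0 hq1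
  have hRA := rrcf_sq_mul_prodA hq0 hq1
  have hsum : (alphaRR : ℂ) + betaRR = 1 := by exact_mod_cast alphaRR_add_betaRR
  have hmul : (alphaRR : ℂ) * betaRR = -1 := by exact_mod_cast alphaRR_mul_betaRR
  obtain ⟨η, hη⟩ := exists_golden_root
  have hη5 : η ^ 5 = 1 := by
    linear_combination (η - 1) * (η ^ 2 + alphaRR * η + 1) * hη -
      (η - 1) * η * (η ^ 2 + 1) * hsum - (η - 1) * η ^ 2 * hmul
  have hη0 : η ≠ 0 := by rintro rfl; norm_num at hη5
  have hη1 : η ≠ 1 := by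
    rintro rfl
    have hb : betaRR = -2 := by
      have : (betaRR : ℂ) = (-2 : ℝ) := by push_cast; linear_combination hη
      exact_mod_cast this
    have : 0 < betaRR := by unfold betaRR; positivity
    linarith
  have hη2 : η ^ 2 ≠ 1 := pow_two_mul_ne_one hη5 hη1 (m := 1) (by norm_num)
  have hη25 : (η ^ 2) ^ 5 = 1 := by rw [← pow_mul, mul_comm, pow_mul, hη5, one_pow]
  set x : ℝ := q ^ ((1 : ℝ) / 5) with hx
  have hx0 : 0 < x := Real.rpow_pos_of_pos hq0 _
  have hx1 : x < 1 := Real.rpow_lt_one hq0.le hq1 (by norm_num)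
  have hx5 : x ^ 5 = q := by
    rw [hx, ← Real.rpow_natCast, ← Real.rpow_mul hq0.le]; norm_num
  have hx5c : (x : ℂ) ^ 5 = q := by exact_mod_cast hx5
  have hxn : ‖(x : ℂ)‖ < 1 := by
    rwa [Complex.norm_real, Real.norm_of_nonneg hx0.le]
  have hxc : (x : ℂ) ≠ 0 := by exact_mod_cast hx0.ne'
  have hcβ : η ^ 2 + 1 = ((alphaRR : ℂ) - 1) * η := by
    linear_combination hη - η * hsum
  have hcα : (η ^ 2) ^ 2 + 1 = ((betaRR : ℂ) - 1) * η ^ 2 := by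
    linear_combination (η ^ 2 - betaRR * η + 1) * hη + η ^ 2 * betaRR * hsum - η ^ 2 * hmul
  have Hα := hasProd_fiveFactor hη2 hη25 hcα hη5 hη1 hxc hxn
  have Hβ := hasProd_fiveFactor hη1 hη5 hcβ hη5 hη1 hxc hxn
  -- `x ^ 2 * B = R(q ^ 2) * A`, so both limits are multiples of `A ^ 5`.
  have e (c : ℂ) : prodA ((x : ℂ) ^ 5) ^ 5 - (c * (x : ℂ) ^ 2 * prodB ((x : ℂ) ^ 5)) ^ 5 =
      prodA q ^ 5 * (1 - c ^ 5 * (rrcf (q ^ 2) : ℂ) ^ 5) := by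
    rw [hx5c, mul_assoc c, ← hRA]; ring
  rw [e] at Hα Hβ
  have hR : 0 ≤ rrcf (q ^ 2) := by
    exact rrcf_nonneg (by positivity) (pow_le_one₀ hq0.le hq1.le)
  have hα0 : alphaRR ≤ 0 := by
    have : (1 : ℝ) ≤ √5 := Real.one_le_sqrt.mpr (by norm_num)
    unfold alphaRR; linarith
  have hden : 1 - (alphaRR : ℂ) ^ 5 * (rrcf (q ^ 2) : ℂ) ^ 5 ≠ 0 := by
    have h1 : alphaRR ^ 5 ≤ 0 := Odd.pow_nonpos (by decide) hα0
    have h2 : alphaRR ^ 5 * rrcf (q ^ 2) ^ 5 ≤ 0 := mul_nonpos_of_nonpos_of_nonneg h1 (by positivity)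
    have h3 : 1 - alphaRR ^ 5 * rrcf (q ^ 2) ^ 5 ≠ 0 := by linarith
    exact_mod_cast h3
  have H := Hα.div₀ Hβ (mul_ne_zero (pow_ne_zero _ hA) hden)
  rw [mul_div_mul_left _ _ (pow_ne_zero _ hA)] at H
  have hpow (m : ℕ) (hm : m ≠ 0) : 1 - (x : ℂ) ^ m ≠ 0 := by
    rw [sub_ne_zero]
    have := (pow_lt_one₀ hx0.le hx1 hm).ne'
    exact_mod_cast this
  rw [← Complex.ofReal_inj, ofReal_tprod]
  push_cast
  rw [← H.tprod_eq]
  have hinj : Function.Injective fun n : ℕ => 5 * n + 4 := fun a b h => by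
    have : 5 * a + 4 = 5 * b + 4 := h
    omega
  -- Only the indices `k = 5 * n + 4`, where `5 ∣ k + 1`, contribute to the quotient.
  rw [← hinj.tprod_eq]
  · refine tprod_congr fun n => ?_
    rw [fiveFactor_of_dvd hη5 (by omega), fiveFactor_of_dvd hη5 (by omega), ← div_pow]
    congr 1
    have hY : (x : ℂ) ^ (2 * (5 * n + 4 + 1)) = (q : ℂ) ^ (2 * (n + 1)) := by
      rw [← hx5c]; ring
    have hY2 : (q : ℂ) ^ (4 * (n + 1)) = ((q : ℂ) ^ (2 * (n + 1))) ^ 2 := by ring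
    have hY1 := hpow (2 * (5 * n + 4 + 1)) (by omega)
    rw [hY] at hY1 ⊢
    rw [hY2, mul_assoc, mul_assoc, mul_div_mul_left _ _ hY1]
    congr 1
    · field_simp
      linear_combination (- (q : ℂ) ^ (2 * (n + 1))) * hcα - (q : ℂ) ^ (2 * (n + 1)) * η ^ 2 * hsum
    · field_simp
      linear_combination (- (q : ℂ) ^ (2 * (n + 1))) * hη
  · intro k hk
    by_contra hk'
    refine hk ?_
    have hd : ¬ 5 ∣ k + 1 := fun ⟨m, hm⟩ => hk' ⟨m - 1, by simp only; omega⟩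
    beta_reduce
    rw [fiveFactor_of_not_dvd hη25 hη5 hη1 hd, fiveFactor_of_not_dvd hη5 hη5 hη1 hd]
    exact div_self (pow_ne_zero _ (hpow _ (by omega)))
end

section
/- For every real q with 0 < q < 1, (θ₂(3π/10; q) / θ₂(π/10; q))⁵ = (−α⁵) · (1 − β⁵·R(q²)⁵) / (1 − α⁵·R(q²)⁵). -/
/-!
The function `θ₂(·; q)` is, up to an elementary factor, a Jacobi triple product with nome `x = q²`:
with `w = -e^(-2iz)` one has `θ₂(z; q) = 2 q^(1/4) cos z · T(w, x)`, where
`T(w, x) = (x; x)_∞ (w x; x)_∞ (x / w; x)_∞` (`theta2_eq`). At `z = 3π/10` and `z = π/10` the number `w` is a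
nontrivial fifth root of unity, and for such `w` the fifth power of `T(w, x)` is controlled by the
Rogers–Ramanujan continued fraction, as follows.

Let `y⁵ = x`. Splitting the theta series of `(1 - w) T(w, y)` by residues modulo `5` gives
`T(w, y) = A + y (w² + w³) B`, where `A = (x⁵, x², x³; x⁵)_∞` and `B = (x⁵, x, x⁴; x⁵)_∞` depend only on `x`
(`triple_dissect`). Multiplying over the five choices of `y` turns the right side into
`A⁵ + (w² + w³)⁵ x B⁵`, and the left side into `D³ T(w, x)⁵` with `D = ∏_{5 ∤ m} (1 - x^m)`
(`triple_pow_five`). Since `R(x)⁵ = x B⁵ / A⁵` (`rrcf_pow_five`), this says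
`1 - c⁵ R(x)⁵ = (D³ / A⁵) T(w, x)⁵` for `c = -(w² + w³)` (`pow_five_of_angle`).

At `z = 3π/10` one finds `c = β`, at `z = π/10` one finds `c = α`. In the quotient of the two identities
the factor `D³ / A⁵` cancels, and `cos (3π/10) = -α cos (π/10)` accounts for the factor `-α⁵`.

The Jacobi triple product itself (`jacobi_triple`) is obtained as the limit of its finite form
`fcoef_hasSum`, which is proved by induction from a recurrence for Gaussian binomial coefficients.
-/

open Real

open Filter Topology

/-! ### The finite form of the Jacobi triple product -/

/-- The infinite `q`-Pochhammer symbol `(w; x)_∞ = ∏_{n ≥ 0} (1 - w xⁿ)`, meaningful for `‖x‖ < 1`. -/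
noncomputable def qp (w x : ℂ) : ℂ := ∏' n : ℕ, (1 - w * x ^ n)

/-- The integer `n (n - 1) / 2` (the division is exact), for all `n : ℤ`. -/
def tri (n : ℤ) : ℤ := n * (n - 1) / 2

lemma two_mul_tri (n : ℤ) : 2 * tri n = n * (n - 1) :=
  Int.two_mul_ediv_two_of_even (Int.even_mul_pred_self n)

lemma tri_add_one (n : ℤ) : tri (n + 1) = tri n + n := by
  have h1 := two_mul_tri n
  have h2 := two_mul_tri (n + 1)
  apply mul_left_cancel₀ (two_ne_zero (α := ℤ))
  linear_combination h2 - h1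

/-- The reciprocal `1 / (x; x)_j` of the finite Pochhammer symbol, extended by `0` to negative `j`.
With this convention `invPoch_sub_one` holds for every integer `j`, so no boundary cases arise. -/
noncomputable def invPoch (x : ℂ) (j : ℤ) : ℂ :=
  if j < 0 then 0 else (∏ k ∈ Finset.range j.toNat, (1 - x ^ (k + 1)))⁻¹

lemma one_sub_pow_ne {x : ℂ} (hx : ‖x‖ < 1) (k : ℕ) : 1 - x ^ (k + 1) ≠ 0 := by
  intro h
  have h1 : ‖x ^ (k + 1)‖ = 1 := by rw [← sub_eq_zero.mp h]; simp
  rw [norm_pow] at h1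
  exact absurd h1 (pow_lt_one₀ (norm_nonneg _) hx (by simp)).ne

lemma invPoch_sub_one {x : ℂ} (hx : ‖x‖ < 1) (j : ℤ) :
    invPoch x (j - 1) = (1 - x ^ j) * invPoch x j := by
  rcases lt_trichotomy j 0 with h | rfl | h
  · simp [invPoch, h, show j - 1 < 0 by omega]
  · simp [invPoch]
  · obtain ⟨k, rfl⟩ : ∃ k : ℕ, j = k + 1 := ⟨(j - 1).toNat, by omega⟩
    have := one_sub_pow_ne hx k
    have e : ((k : ℤ) + 1).toNat = k + 1 := by omega
    have e2 : x ^ ((k : ℤ) + 1) = x ^ (k + 1) := by exact_mod_cast zpow_natCast x (k + 1)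
    simp only [invPoch, show ¬ ((k : ℤ) + 1 < 0) by omega, show ¬ ((k : ℤ) < 0) by omega,
      if_false, e, add_sub_cancel_right, Int.toNat_natCast, Finset.prod_range_succ, mul_inv, e2]
    field_simp

/-- The finite Pochhammer symbol `(x; x)_m = (1 - x) (1 - x²) ⋯ (1 - x^m)`. -/
noncomputable def poch (x : ℂ) (m : ℕ) : ℂ := ∏ k ∈ Finset.range m, (1 - x ^ (k + 1))

/-- The coefficient of `zⁿ` in `∏_{k < m} (1 - z x^k) (1 - x^(k+1) / z)`, namely
`(-1)ⁿ x^(n(n-1)/2)` times the Gaussian binomial coefficient `[2m, m + n]`. It is `0` for `|n| > m`. -/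
noncomputable def fcoef (x : ℂ) (m : ℕ) (n : ℤ) : ℂ :=
  poch x (2 * m) * invPoch x (m + n) * invPoch x (m - n) * ((-1) ^ n * x ^ tri n)

/-- The recurrence obtained by multiplying the `m`-th finite product by
`(1 - z x^m) (1 - x^(m+1) / z)` and comparing coefficients of `zⁿ`. -/
lemma fcoef_succ {x : ℂ} (hx0 : x ≠ 0) (hx : ‖x‖ < 1) (m : ℕ) (n : ℤ) :
    fcoef x (m + 1) n = (1 + x ^ (2 * m + 1)) * fcoef x m n - x ^ m * fcoef x m (n - 1)
      - x ^ (m + 1) * fcoef x m (n + 1) := by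
  have p : poch x (2 * (m + 1)) = poch x (2 * m) * (1 - x ^ (2 * m + 1)) * (1 - x ^ (2 * m + 2)) := by
    simp [poch, mul_add, Finset.prod_range_succ]
  have a1 : invPoch x (m + n) = (1 - x ^ ((m + 1 : ℤ) + n)) * invPoch x ((m + 1 : ℤ) + n) := by
    rw [← invPoch_sub_one hx]; congr 1; ring
  have a2 : invPoch x (m + (n - 1)) = (1 - x ^ ((m : ℤ) + n)) * invPoch x ((m : ℤ) + n) := by
    rw [← invPoch_sub_one hx]; congr 1; ring
  have a3 : invPoch x (m + (n + 1)) = invPoch x ((m + 1 : ℤ) + n) := by congr 1; ring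
  have b1 : invPoch x (m - n) = (1 - x ^ ((m + 1 : ℤ) - n)) * invPoch x ((m + 1 : ℤ) - n) := by
    rw [← invPoch_sub_one hx]; congr 1; ring
  have b2 : invPoch x (m - (n + 1)) = (1 - x ^ ((m : ℤ) - n)) * invPoch x ((m : ℤ) - n) := by
    rw [← invPoch_sub_one hx]; congr 1; ring
  have b3 : invPoch x (m - (n - 1)) = invPoch x ((m + 1 : ℤ) - n) := by congr 1; ring
  have t1 : tri (n + 1) = tri n + n := tri_add_one n
  have t2 : tri (n - 1) = tri n - (n - 1) := by
    have := tri_add_one (n - 1); rw [sub_add_cancel] at this; omega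
  have s1 : (-1 : ℂ) ^ (n + 1) = - (-1) ^ n := by rw [zpow_add₀ (by norm_num)]; simp
  have s2 : (-1 : ℂ) ^ (n - 1) = - (-1) ^ n := by
    rw [zpow_sub₀ (by norm_num)]; simp [div_neg]
  unfold fcoef
  rw [p, a2, b2, a1, b1, a3, b3, t1, t2, s1, s2]
  push_cast
  have z1 : ∀ i j : ℤ, x ^ (i + j) = x ^ i * x ^ j := fun i j => zpow_add₀ hx0 i j
  have z2 : ∀ i j : ℤ, x ^ (i - j) = x ^ i / x ^ j := fun i j => zpow_sub₀ hx0 i j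
  simp only [z1, z2, zpow_natCast, zpow_one]
  have hn : x ^ n ≠ 0 := zpow_ne_zero _ hx0
  have hm : x ^ m ≠ 0 := pow_ne_zero _ hx0
  generalize invPoch x _ = U
  generalize invPoch x _ = V
  generalize x ^ tri n = W
  generalize poch x _ = Q
  rw [show x ^ (2 * m + 1) = (x ^ m) ^ 2 * x by ring, show x ^ (2 * m + 2) = (x ^ m) ^ 2 * x ^ 2 by ring,
    pow_succ x m]
  generalize x ^ m = a at *
  generalize x ^ n = b at *
  generalize (-1 : ℂ) ^ n = s
  field_simp
  ring

/-- Finite form of the Jacobi triple product. -/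
lemma fcoef_hasSum {x z : ℂ} (hx0 : x ≠ 0) (hx : ‖x‖ < 1) (hz : z ≠ 0) (m : ℕ) :
    HasSum (fun n : ℤ => fcoef x m n * z ^ n)
      ((∏ k ∈ Finset.range m, (1 - z * x ^ k)) * ∏ k ∈ Finset.range m, (1 - x / z * x ^ k)) := by
  induction m with
  | zero =>
    have h := hasSum_single (f := fun n : ℤ => fcoef x 0 n * z ^ n) 0 (by
      intro n hn
      rcases lt_or_gt_of_ne hn with h | h
      · simp [fcoef, invPoch, h]
      · simp [fcoef, invPoch, h])
    simpa [fcoef, invPoch, poch, tri] using h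
  | succ m ih =>
    have h1 := ih.mul_left (1 + x ^ (2 * m + 1))
    have h2 := (((Equiv.subRight (1 : ℤ)).hasSum_iff).mpr ih).mul_left (x ^ m * z)
    have h3 := (((Equiv.addRight (1 : ℤ)).hasSum_iff).mpr ih).mul_left (x ^ (m + 1) / z)
    have h := (h1.sub h2).sub h3
    have e1 : ∀ n : ℤ, fcoef x (m + 1) n * z ^ n = (1 + x ^ (2 * m + 1)) * (fcoef x m n * z ^ n)
        - x ^ m * z * (fcoef x m (n - 1) * z ^ (n - 1))
        - x ^ (m + 1) / z * (fcoef x m (n + 1) * z ^ (n + 1)) := by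
      intro n
      rw [fcoef_succ hx0 hx, zpow_add₀ hz, zpow_sub₀ hz]
      field_simp
    rw [funext e1, Finset.prod_range_succ, Finset.prod_range_succ]
    -- The next factor, expanded so as to match the recurrence for the coefficients.
    have e3 : ∀ P Q : ℂ, P * (1 - z * x ^ m) * (Q * (1 - x / z * x ^ m)) =
        (1 + x ^ (2 * m + 1)) * (P * Q) - x ^ m * z * (P * Q) - x ^ (m + 1) / z * (P * Q) := by
      intro P Q
      field_simp
      ring
    rw [e3]
    exact h

/-! ### The infinite products and the Jacobi triple product -/

lemma qp_summable (w : ℂ) {x : ℂ} (hx : ‖x‖ < 1) : Summable (fun n : ℕ => ‖-(w * x ^ n)‖) := by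
  simp only [norm_neg, norm_mul, norm_pow]
  exact (summable_geometric_of_lt_one (norm_nonneg _) hx).mul_left _

lemma qp_hasProd (w : ℂ) {x : ℂ} (hx : ‖x‖ < 1) : HasProd (fun n : ℕ => 1 - w * x ^ n) (qp w x) := by
  have := (multipliable_one_add_of_summable (qp_summable w hx)).hasProd
  simpa only [qp, sub_eq_add_neg] using this

lemma qp_tendsto (w : ℂ) {x : ℂ} (hx : ‖x‖ < 1) :
    Tendsto (fun N => ∏ n ∈ Finset.range N, (1 - w * x ^ n)) atTop (𝓝 (qp w x)) :=
  (qp_hasProd w hx).tendsto_prod_nat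

lemma qp_succ (w : ℂ) {x : ℂ} (hx : ‖x‖ < 1) : qp w x = (1 - w) * qp (w * x) x := by
  refine tendsto_nhds_unique ((tendsto_add_atTop_iff_nat 1).mpr (qp_tendsto w hx)) ?_
  refine ((qp_tendsto (w * x) hx).const_mul (1 - w)).congr fun N => ?_
  rw [Finset.prod_range_succ']
  simp [mul_comm (1 - w), pow_succ', mul_assoc]

lemma qp_ne_zero {w x : ℂ} (hw : ‖w‖ < 1) (hx : ‖x‖ < 1) : qp w x ≠ 0 := by
  have := tprod_one_add_ne_zero_of_summable (f := fun n : ℕ => -(w * x ^ n)) (fun n h => ?_)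
    (qp_summable w hx)
  · simpa only [qp, sub_eq_add_neg] using this
  · have h1 : ‖w * x ^ n‖ = 1 := by
      rw [← sub_eq_zero.mp ((sub_eq_add_neg _ _).trans h)]; simp
    rw [norm_mul, norm_pow] at h1
    have h2 : ‖x‖ ^ n ≤ 1 := pow_le_one₀ (norm_nonneg _) hx.le
    nlinarith [norm_nonneg w, pow_nonneg (norm_nonneg x) n]

/-- The bilateral theta series `∑_{n ∈ ℤ} (-1)ⁿ x^(n(n-1)/2) wⁿ`. -/
noncomputable def thS (x w : ℂ) : ℂ := ∑' n : ℤ, (-1) ^ n * x ^ tri n * w ^ n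

lemma tri_nat_succ (k : ℕ) : tri ((k + 1 : ℕ) : ℤ) = tri k + k := by
  push_cast; exact tri_add_one k

lemma tri_neg (n : ℤ) : tri (-n) = tri n + n := by
  have h1 := two_mul_tri n
  have h2 := two_mul_tri (-n)
  apply mul_left_cancel₀ (two_ne_zero (α := ℤ))
  linear_combination h2 - h1

lemma summable_half {x w : ℂ} (hx0 : x ≠ 0) (hx : ‖x‖ < 1) (hw : w ≠ 0) :
    Summable (fun n : ℕ => (-1 : ℂ) ^ (n : ℤ) * x ^ tri n * w ^ (n : ℤ)) := by
  have hne : ∀ n : ℕ, (-1 : ℂ) ^ (n : ℤ) * x ^ tri n * w ^ (n : ℤ) ≠ 0 := fun n =>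
    mul_ne_zero (mul_ne_zero (zpow_ne_zero _ (by norm_num)) (zpow_ne_zero _ hx0)) (zpow_ne_zero _ hw)
  refine summable_of_ratio_test_tendsto_lt_one (l := 0) one_pos (Eventually.of_forall hne) ?_
  have : Tendsto (fun n : ℕ => ‖x‖ ^ n * ‖w‖) atTop (𝓝 (0 * ‖w‖)) :=
    (tendsto_pow_atTop_nhds_zero_of_lt_one (norm_nonneg _) hx).mul_const _
  rw [zero_mul] at this
  refine this.congr fun n => ?_
  have e : (-1 : ℂ) ^ ((n + 1 : ℕ) : ℤ) * x ^ tri ((n + 1 : ℕ) : ℤ) * w ^ ((n + 1 : ℕ) : ℤ) =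
      -(x ^ n * w) * ((-1 : ℂ) ^ (n : ℤ) * x ^ tri n * w ^ (n : ℤ)) := by
    rw [tri_nat_succ, zpow_add₀ hx0]
    simp only [zpow_natCast]
    ring
  rw [e, norm_mul, mul_div_cancel_right₀ _ (norm_ne_zero_iff.mpr (hne n)), norm_neg, norm_mul,
    norm_pow]

lemma thS_summable {x w : ℂ} (hx0 : x ≠ 0) (hx : ‖x‖ < 1) (hw : w ≠ 0) :
    Summable (fun n : ℤ => (-1 : ℂ) ^ n * x ^ tri n * w ^ n) := by
  refine Summable.of_nat_of_neg (summable_half hx0 hx hw) ?_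
  refine (summable_half hx0 hx (w := x / w) (div_ne_zero hx0 hw)).congr fun n => ?_
  rw [tri_neg, zpow_add₀ hx0, div_zpow, zpow_neg, zpow_neg, zpow_natCast (-1 : ℂ), ← inv_pow]
  norm_num
  ring

lemma poch_eq (x : ℂ) (m : ℕ) : poch x m = ∏ k ∈ Finset.range m, (1 - x * x ^ k) := by
  simp [poch, pow_succ']

lemma invPoch_tendsto {x : ℂ} (hx : ‖x‖ < 1) :
    Tendsto (invPoch x) atTop (𝓝 (qp x x)⁻¹) := by
  have ht : Tendsto Int.toNat atTop atTop := by
    refine tendsto_atTop.mpr fun b => ?_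
    filter_upwards [eventually_ge_atTop (b : ℤ)] with j hj
    omega
  have h := ((qp_tendsto x hx).inv₀ (qp_ne_zero hx hx)).comp ht
  refine h.congr' ?_
  filter_upwards [eventually_ge_atTop 0] with j hj
  simp [invPoch, hj.not_gt, pow_succ']

lemma invPoch_bdd {x : ℂ} (hx : ‖x‖ < 1) : ∃ C, 0 ≤ C ∧ ∀ j, ‖invPoch x j‖ ≤ C := by
  have h := ((qp_tendsto x hx).inv₀ (qp_ne_zero hx hx)).norm
  obtain ⟨C, hC⟩ := h.bddAbove_range
  have hC' : ∀ n : ℕ, ‖(∏ k ∈ Finset.range n, (1 - x * x ^ k))⁻¹‖ ≤ C := fun n => hC ⟨n, rfl⟩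
  refine ⟨C, (norm_nonneg _).trans (hC' 0), fun j => ?_⟩
  unfold invPoch
  split_ifs
  · simpa using (norm_nonneg _).trans (hC' 0)
  · simpa [pow_succ'] using hC' j.toNat

/-- The Jacobi triple product, as the limit `m → ∞` of `fcoef_hasSum`; the interchange of limit and
sum is by dominated convergence, since all the Pochhammer factors of `fcoef` are bounded. -/
theorem jacobi_triple {x z : ℂ} (hx0 : x ≠ 0) (hx : ‖x‖ < 1) (hz : z ≠ 0) :
    qp x x * qp z x * qp (x / z) x = thS x z := by
  have hQ := qp_ne_zero hx hx
  have hpo : Tendsto (fun m : ℕ => poch x (2 * m)) atTop (𝓝 (qp x x)) := by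
    simp only [poch_eq]
    exact (qp_tendsto x hx).comp (tendsto_id.const_mul_atTop' (by norm_num))
  obtain ⟨C, hC0, hC⟩ := invPoch_bdd hx
  obtain ⟨D, hD⟩ := hpo.norm.bddAbove_range
  have hD' : ∀ m : ℕ, ‖poch x (2 * m)‖ ≤ D := fun n => hD ⟨n, rfl⟩
  have hD0 : 0 ≤ D := (norm_nonneg _).trans (hD' 0)
  have key : Tendsto (fun m : ℕ => ∑' n : ℤ, fcoef x m n * z ^ n) atTop
      (𝓝 (∑' n : ℤ, (qp x x)⁻¹ * ((-1) ^ n * x ^ tri n * z ^ n))) := by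
    refine tendsto_tsum_of_dominated_convergence
      (bound := fun n => D * C * C * ‖(-1) ^ n * x ^ tri n * z ^ n‖)
      ((thS_summable hx0 hx hz).norm.mul_left _) (fun n => ?_) (Eventually.of_forall fun m n => ?_)
    · have t1 : Tendsto (fun m : ℕ => invPoch x (m + n)) atTop (𝓝 (qp x x)⁻¹) :=
        (invPoch_tendsto hx).comp (tendsto_atTop_add_const_right _ _ tendsto_natCast_atTop_atTop)
      have t2 : Tendsto (fun m : ℕ => invPoch x (m - n)) atTop (𝓝 (qp x x)⁻¹) :=
        (invPoch_tendsto hx).comp (tendsto_atTop_add_const_right _ _ tendsto_natCast_atTop_atTop)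
      have t3 := (((hpo.mul t1).mul t2).mul_const ((-1) ^ n * x ^ tri n)).mul_const (z ^ n)
      have e : (qp x x)⁻¹ * ((-1) ^ n * x ^ tri n * z ^ n) =
          qp x x * (qp x x)⁻¹ * (qp x x)⁻¹ * ((-1) ^ n * x ^ tri n) * z ^ n := by
        field_simp
      rw [e]
      exact t3
    · have e : fcoef x m n * z ^ n = poch x (2 * m) * invPoch x (m + n) * invPoch x (m - n) *
          ((-1) ^ n * x ^ tri n * z ^ n) := by unfold fcoef; ring
      rw [e, norm_mul, norm_mul, norm_mul]
      gcongr
      · exact hD' m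
      · exact hC _
      · exact hC _
  rw [tsum_mul_left] at key
  have key2 := tendsto_nhds_unique key (((qp_tendsto z hx).mul (qp_tendsto (x / z) hx)).congr
    fun m => (fcoef_hasSum hx0 hx hz m).tsum_eq.symm)
  rw [thS, mul_assoc, ← key2]
  field_simp

/-! ### Quintic dissection at a fifth root of unity -/

lemma tri_five (m : ℤ) (r : ℕ) : tri (m * 5 + r) = 25 * tri m + (10 + 5 * r) * m + tri r := by
  have h1 := two_mul_tri m
  have h2 := two_mul_tri (m * 5 + r)
  have h3 := two_mul_tri r
  apply mul_left_cancel₀ (two_ne_zero (α := ℤ))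
  linear_combination h2 - 25 * h1 - h3

/-- Splitting the theta series by the residue `r` of `n` modulo `5`: when `w⁵ = 1` each class is again
a theta series, with nome `y^25`. -/
lemma thS_dissect {y w : ℂ} (hy0 : y ≠ 0) (hy : ‖y‖ < 1) (hw0 : w ≠ 0) (hw : w ^ 5 = 1) :
    thS y w = ∑ r : Fin 5, (-1) ^ (r : ℕ) * y ^ tri (r : ℕ) * w ^ (r : ℕ) *
      thS ((y ^ 5) ^ 5) ((y ^ 5) ^ (2 + (r : ℕ))) := by
  have hY : ‖(y ^ 5) ^ 5‖ < 1 := by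
    rw [norm_pow, norm_pow]
    exact pow_lt_one₀ (by positivity) (pow_lt_one₀ (norm_nonneg _) hy (by norm_num)) (by norm_num)
  have hs := thS_summable hy0 hy hw0
  have hs2 := ((Int.divModEquiv 5).symm.summable_iff).mpr hs
  have hterm : ∀ (m : ℤ) (r : Fin 5),
      ((fun n : ℤ => (-1 : ℂ) ^ n * y ^ tri n * w ^ n) ∘ (Int.divModEquiv 5).symm) (m, r) =
      (-1) ^ (r : ℕ) * y ^ tri (r : ℕ) * w ^ (r : ℕ) *
        ((-1) ^ m * ((y ^ 5) ^ 5) ^ tri m * ((y ^ 5) ^ (2 + (r : ℕ))) ^ m) := by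
    intro m r
    simp only [Function.comp, Int.divModEquiv_symm_apply]
    have e1 : (-1 : ℂ) ^ (m * 5 + (r : ℕ) : ℤ) = (-1) ^ (r : ℕ) * (-1) ^ m := by
      rw [zpow_add₀ (by norm_num), mul_comm m 5, zpow_mul, zpow_natCast, mul_comm]
      norm_num
    have e2 : w ^ (m * 5 + (r : ℕ) : ℤ) = w ^ (r : ℕ) := by
      rw [zpow_add₀ hw0, mul_comm m 5, zpow_mul, zpow_natCast]
      have : w ^ (5 : ℤ) = 1 := by exact_mod_cast hw
      rw [this]; simp
    have e3 : y ^ tri (m * 5 + (r : ℕ)) = y ^ tri (r : ℕ) *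
        (((y ^ 5) ^ 5) ^ tri m * ((y ^ 5) ^ (2 + (r : ℕ))) ^ m) := by
      rw [tri_five, zpow_add₀ hy0, zpow_add₀ hy0, zpow_mul, zpow_mul, mul_comm, ← pow_mul, ← pow_mul]
      congr 3
      norm_cast
      congr 1
      ring
    push_cast
    rw [e1, e2, e3]
    ring
  rw [thS, ← (Int.divModEquiv 5).symm.tsum_eq, Summable.tsum_prod (f := fun p : ℤ × Fin 5 =>
    (fun n : ℤ => (-1 : ℂ) ^ n * y ^ tri n * w ^ n) ((Int.divModEquiv 5).symm p)) hs2]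
  have : ∀ (m : ℤ) (r : Fin 5), (fun n : ℤ => (-1 : ℂ) ^ n * y ^ tri n * w ^ n)
      ((Int.divModEquiv 5).symm (m, r)) = _ := hterm
  simp only [this, tsum_fintype]
  rw [Summable.tsum_finsetSum]
  · simp only [tsum_mul_left]
    rfl
  · intro r _
    exact (thS_summable (by positivity) hY (by positivity)).mul_left _

/-- The product `(x; x)_∞ (w x; x)_∞ (x / w; x)_∞`, i.e. `thS x w` without its factor `1 - w`. -/
noncomputable def triple (w x : ℂ) : ℂ := qp x x * qp (w * x) x * qp (x / w) x

lemma thS_eq_triple {x w : ℂ} (hx0 : x ≠ 0) (hx : ‖x‖ < 1) (hw : w ≠ 0) :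
    thS x w = (1 - w) * triple w x := by
  rw [← jacobi_triple hx0 hx hw, qp_succ w hx, triple]
  ring

/-- The theta product `(X⁵, X², X³; X⁵)_∞`, the denominator of the Rogers–Ramanujan quotient. -/
noncomputable def rrA (X : ℂ) : ℂ := qp (X ^ 5) (X ^ 5) * qp (X ^ 2) (X ^ 5) * qp (X ^ 3) (X ^ 5)

/-- The theta product `(X⁵, X, X⁴; X⁵)_∞`, the numerator of the Rogers–Ramanujan quotient. -/
noncomputable def rrB (X : ℂ) : ℂ := qp (X ^ 5) (X ^ 5) * qp X (X ^ 5) * qp (X ^ 4) (X ^ 5)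

lemma norm_pow_lt {x : ℂ} (hx : ‖x‖ < 1) {n : ℕ} (hn : n ≠ 0) : ‖x ^ n‖ < 1 := by
  rw [norm_pow]; exact pow_lt_one₀ (norm_nonneg _) hx hn

/-- For a nontrivial fifth root of unity `w`, the five classes of `thS_dissect` collapse to the two
products `rrA` and `rrB`: the class `r = 3` vanishes, the others pair up, and the factor `1 - w`
can be cancelled. -/
lemma triple_dissect {y w : ℂ} (hy0 : y ≠ 0) (hy : ‖y‖ < 1) (hw1 : w ≠ 1) (hw : w ^ 5 = 1) :
    triple w y = rrA (y ^ 5) + y * (w ^ 2 + w ^ 3) * rrB (y ^ 5) := by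
  have hw0 : w ≠ 0 := by rintro rfl; norm_num at hw
  have h := thS_dissect hy0 hy hw0 hw
  rw [thS_eq_triple hy0 hy hw0] at h
  have hX0 : y ^ 5 ≠ 0 := pow_ne_zero _ hy0
  have hX : ‖y ^ 5‖ < 1 := norm_pow_lt hy (by norm_num)
  have h6 : y ^ 6 = y * y ^ 5 := by ring
  generalize hXd : y ^ 5 = X at *
  have hY : ‖X ^ 5‖ < 1 := norm_pow_lt hX (by norm_num)
  have hY0 : X ^ 5 ≠ 0 := pow_ne_zero _ hX0
  have hX1 : 1 - X ≠ 0 := by simpa using one_sub_pow_ne hX 0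
  have s2 : thS (X ^ 5) (X ^ 2) = rrA X := by
    rw [← jacobi_triple hY0 hY (by positivity), rrA, show X ^ 5 / X ^ 2 = X ^ 3 by field_simp]
  have s3 : thS (X ^ 5) (X ^ 3) = rrA X := by
    rw [← jacobi_triple hY0 hY (by positivity), rrA, show X ^ 5 / X ^ 3 = X ^ 2 by field_simp]
    ring
  have s4 : thS (X ^ 5) (X ^ 4) = rrB X := by
    rw [← jacobi_triple hY0 hY (by positivity), rrB, show X ^ 5 / X ^ 4 = X by field_simp]
    ring
  have s5 : thS (X ^ 5) (X ^ 5) = 0 := by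
    rw [← jacobi_triple hY0 hY (by positivity), div_self hY0, qp_succ 1 hY]
    ring
  have s6 : X * thS (X ^ 5) (X ^ 6) = - rrB X := by
    rw [← jacobi_triple hY0 hY (by positivity), rrB, show X ^ 5 / X ^ 6 = X⁻¹ by field_simp,
      qp_succ X⁻¹ hY, qp_succ X hY, show X⁻¹ * X ^ 5 = X ^ 4 by field_simp,
      show X * X ^ 5 = X ^ 6 by ring]
    field_simp
    ring
  have hw1' : 1 - w ≠ 0 := sub_ne_zero.mpr hw1.symm
  apply mul_left_cancel₀ hw1'
  rw [h]
  simp only [Fin.sum_univ_five]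
  norm_num [tri, s2, s3, s4, s5]
  -- `y⁶ thS(X⁵, X⁶) = y (X thS(X⁵, X⁶)) = -y B`, which supplies the sign needed to extract `1 - w`.
  rw [h6]
  linear_combination y * w ^ 4 * s6

/-! ### Products over the five fifth roots of the nome -/

lemma prod_roots {ω : ℂ} (h : 1 + ω + ω ^ 2 + ω ^ 3 + ω ^ 4 = 0) (a t : ℂ) :
    (a + t) * (a + ω * t) * (a + ω ^ 2 * t) * (a + ω ^ 3 * t) * (a + ω ^ 4 * t) = a ^ 5 + t ^ 5 := by
  have h5 : ω ^ 5 = 1 := by linear_combination (ω - 1) * h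
  have e1 : (a + ω * t) * (a + ω ^ 4 * t) = a ^ 2 + (ω + ω ^ 4) * a * t + t ^ 2 := by
    linear_combination t ^ 2 * h5
  have e2 : (a + ω ^ 2 * t) * (a + ω ^ 3 * t) = a ^ 2 + (ω ^ 2 + ω ^ 3) * a * t + t ^ 2 := by
    linear_combination t ^ 2 * h5
  have e3 : (ω + ω ^ 4) * (ω ^ 2 + ω ^ 3) = -1 := by
    linear_combination h + (ω + ω ^ 2) * h5
  have e4 : ω ^ 2 + ω ^ 3 = -1 - (ω + ω ^ 4) := by linear_combination h
  rw [e4] at e2 e3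
  generalize ω + ω ^ 4 = s at *
  calc _ = (a + t) * ((a + ω * t) * (a + ω ^ 4 * t)) * ((a + ω ^ 2 * t) * (a + ω ^ 3 * t)) := by ring
    _ = _ := by
      rw [e1, e2]
      linear_combination (a + t) * a ^ 2 * t ^ 2 * e3

/-- The product `∏ (1 - X^m)` over the positive integers `m` not divisible by `5`. -/
noncomputable def rrD (X : ℂ) : ℂ :=
  qp X (X ^ 5) * qp (X ^ 2) (X ^ 5) * qp (X ^ 3) (X ^ 5) * qp (X ^ 4) (X ^ 5)

/-- The `n`-th factors of `(v y; y)_∞` multiplied over `y ↦ ω^k y`: the result is a fifth power or a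
full product over fifth roots of unity, according to whether `5` divides `n + 1`. -/
lemma factor_prod_roots {ω y v : ℂ} (h : 1 + ω + ω ^ 2 + ω ^ 3 + ω ^ 4 = 0) (hv : v ^ 5 = 1)
    (n : ℕ) :
    (1 - v * y * y ^ n) * (1 - v * (ω * y) * (ω * y) ^ n) *
      (1 - v * (ω ^ 2 * y) * (ω ^ 2 * y) ^ n) * (1 - v * (ω ^ 3 * y) * (ω ^ 3 * y) ^ n) *
      (1 - v * (ω ^ 4 * y) * (ω ^ 4 * y) ^ n) =
    if 5 ∣ n + 1 then (1 - v * y ^ (n + 1)) ^ 5 else 1 - y ^ (5 * (n + 1)) := by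
  have h5 : ω ^ 5 = 1 := by linear_combination (ω - 1) * h
  have e : ∀ u : ℂ, 1 - v * (u * y) * (u * y) ^ n = 1 + u ^ (n + 1) * -(v * y ^ (n + 1)) := by
    intro u; ring
  have e0 : 1 - v * y * y ^ n = 1 + -(v * y ^ (n + 1)) := by ring
  rw [e0, e, e, e, e]
  simp only [← pow_mul, mul_comm _ (n + 1)]
  simp only [pow_mul]
  split_ifs with hn
  · obtain ⟨a, ha⟩ := hn
    have : ω ^ (n + 1) = 1 := by rw [ha, pow_mul, h5, one_pow]
    rw [this]
    ring
  · have hω : 1 + ω ^ (n + 1) + (ω ^ (n + 1)) ^ 2 + (ω ^ (n + 1)) ^ 3 + (ω ^ (n + 1)) ^ 4 = 0 := by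
      have : ω ^ (n + 1) = ω ^ ((n + 1) % 5) := by
        conv_lhs => rw [← Nat.div_add_mod (n + 1) 5, pow_add, pow_mul, h5, one_pow, one_mul]
      rw [this]
      have : (n + 1) % 5 = 1 ∨ (n + 1) % 5 = 2 ∨ (n + 1) % 5 = 3 ∨ (n + 1) % 5 = 4 := by omega
      rcases this with h' | h' | h' | h' <;> rw [h']
      · linear_combination h
      · linear_combination h + (ω + ω ^ 3) * h5
      · linear_combination h + (ω + ω ^ 4 + ω ^ 7 + ω ^ 2) * h5
      · linear_combination h + (ω ^ 3 + ω ^ 2 + ω ^ 7 + ω + ω ^ 6 + ω ^ 11) * h5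
    rw [prod_roots hω]
    linear_combination (-y ^ (5 * (n + 1))) * hv

/-- The product of `(v y; y)_∞` over the five fifth roots `ω^k y` of `X = y⁵`, for `v⁵ = 1`. -/
lemma qp_prod_roots {ω y v : ℂ} (h : 1 + ω + ω ^ 2 + ω ^ 3 + ω ^ 4 = 0) (hy : ‖y‖ < 1)
    (hv : v ^ 5 = 1) :
    qp (v * y) y * qp (v * (ω * y)) (ω * y) * qp (v * (ω ^ 2 * y)) (ω ^ 2 * y) *
      qp (v * (ω ^ 3 * y)) (ω ^ 3 * y) * qp (v * (ω ^ 4 * y)) (ω ^ 4 * y) =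
    rrD (y ^ 5) * qp (v * y ^ 5) (y ^ 5) ^ 5 := by
  have h5 : ω ^ 5 = 1 := by linear_combination (ω - 1) * h
  have hω : ‖ω‖ = 1 := by
    have : ‖ω‖ ^ 5 = 1 := by rw [← norm_pow, h5, norm_one]
    exact (pow_eq_one_iff_of_nonneg (norm_nonneg _) (by norm_num)).mp this
  have hk : ∀ k : ℕ, ‖ω ^ k * y‖ < 1 := fun k => by simpa [hω] using hy
  have hk1 : ‖ω * y‖ < 1 := by simpa [hω] using hy
  have hX : ‖y ^ 5‖ < 1 := norm_pow_lt hy (by norm_num)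
  have hY : ‖(y ^ 5) ^ 5‖ < 1 := norm_pow_lt hX (by norm_num)
  have t5 : Tendsto (fun N : ℕ => 5 * N) atTop atTop := tendsto_id.const_mul_atTop' (by norm_num)
  have L := (((((qp_tendsto (v * y) hy).mul (qp_tendsto (v * (ω * y)) hk1)).mul
    (qp_tendsto (v * (ω ^ 2 * y)) (hk 2))).mul (qp_tendsto (v * (ω ^ 3 * y)) (hk 3))).mul
    (qp_tendsto (v * (ω ^ 4 * y)) (hk 4))).comp t5
  have Rr := ((((qp_tendsto (y ^ 5) hY).mul (qp_tendsto ((y ^ 5) ^ 2) hY)).mul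
    (qp_tendsto ((y ^ 5) ^ 3) hY)).mul (qp_tendsto ((y ^ 5) ^ 4) hY)).mul
    ((qp_tendsto (v * y ^ 5) hX).pow 5)
  refine tendsto_nhds_unique L (Rr.congr fun N => ?_)
  simp only [Function.comp]
  simp only [← Finset.prod_mul_distrib, ← Finset.prod_pow]
  rw [Finset.prod_congr rfl fun n _ => factor_prod_roots h hv n]
  induction N with
  | zero => simp
  | succ N ih =>
    rw [Finset.prod_range_succ, ih, show 5 * (N + 1) = 5 * N + 1 + 1 + 1 + 1 + 1 by ring]
    simp only [Finset.prod_range_succ]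
    rw [if_neg (by omega), if_neg (by omega), if_neg (by omega), if_neg (by omega),
      if_pos (by omega)]
    ring

/-- Multiplying `triple_dissect` over the five fifth roots of `y⁵`. The left side is an instance of
`∏ (a + ω^k t) = a⁵ + t⁵`, the right side comes from `qp_prod_roots` with `v = 1, w, w⁻¹`. -/
lemma triple_pow_five {ω y w : ℂ} (h : 1 + ω + ω ^ 2 + ω ^ 3 + ω ^ 4 = 0) (hy0 : y ≠ 0)
    (hy : ‖y‖ < 1) (hw1 : w ≠ 1) (hw : w ^ 5 = 1) :
    rrA (y ^ 5) ^ 5 + (w ^ 2 + w ^ 3) ^ 5 * y ^ 5 * rrB (y ^ 5) ^ 5 =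
      rrD (y ^ 5) ^ 3 * triple w (y ^ 5) ^ 5 := by
  have h5 : ω ^ 5 = 1 := by linear_combination (ω - 1) * h
  have hω : ‖ω‖ = 1 := by
    have : ‖ω‖ ^ 5 = 1 := by rw [← norm_pow, h5, norm_one]
    exact (pow_eq_one_iff_of_nonneg (norm_nonneg _) (by norm_num)).mp this
  have hω0 : ω ≠ 0 := by rintro rfl; norm_num at hω
  have d : ∀ k : ℕ, triple w (ω ^ k * y) =
      rrA (y ^ 5) + ω ^ k * (y * (w ^ 2 + w ^ 3) * rrB (y ^ 5)) := by
    intro k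
    have e : (ω ^ k * y) ^ 5 = y ^ 5 := by
      rw [mul_pow, ← pow_mul, mul_comm k 5, pow_mul, h5, one_pow, one_mul]
    rw [triple_dissect (mul_ne_zero (pow_ne_zero _ hω0) hy0) (by simpa [hω] using hy) hw1 hw, e]
    ring
  have p1 := qp_prod_roots (v := 1) h hy (by norm_num)
  have p2 := qp_prod_roots h hy hw
  have p3 := qp_prod_roots (v := w⁻¹) h hy (by rw [inv_pow, hw, inv_one])
  have d0 := d 0
  have d1 := d 1
  simp only [pow_zero, pow_one, one_mul] at d0 d1 p1
  have hr := prod_roots h (rrA (y ^ 5)) (y * (w ^ 2 + w ^ 3) * rrB (y ^ 5))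
  rw [← d0, ← d1, ← d 2, ← d 3, ← d 4] at hr
  calc _ = rrA (y ^ 5) ^ 5 + (y * (w ^ 2 + w ^ 3) * rrB (y ^ 5)) ^ 5 := by ring
    _ = _ := by
      rw [← hr]
      simp only [triple, div_eq_inv_mul _ w]
      trans (rrD (y ^ 5) * qp (y ^ 5) (y ^ 5) ^ 5) * (rrD (y ^ 5) * qp (w * y ^ 5) (y ^ 5) ^ 5) *
        (rrD (y ^ 5) * qp (w⁻¹ * y ^ 5) (y ^ 5) ^ 5)
      · rw [← p1, ← p2, ← p3]; ring
      · ring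

/-! ### The function `θ₂` as a triple product -/

lemma rpow_sq_half {q : ℝ} (hq : 0 < q) (n : ℕ) :
    q ^ (((n : ℝ) + 1 / 2) ^ 2) = q ^ ((1 : ℝ) / 4) * (q ^ 2) ^ tri ((n : ℤ) + 1) := by
  have h : ((2 * tri ((n : ℤ) + 1) : ℤ) : ℝ) = (n + 1) * n := by
    rw [two_mul_tri]; push_cast; ring
  rw [show (q ^ 2) ^ tri ((n : ℤ) + 1) = q ^ (2 * tri ((n : ℤ) + 1)) by rw [zpow_mul]; norm_cast,
    ← Real.rpow_intCast, ← Real.rpow_add hq, h]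
  congr 1
  ring

/-- The product formula `θ₂(z; q) = 2 q^(1/4) cos z · (x; x)_∞ (w x; x)_∞ (x / w; x)_∞` with `x = q²` and
`w = -e^(-2iz)`. Folding the bilateral series along `n + 1 ↔ -n` turns exponentials into cosines. -/
lemma theta2_eq {q : ℝ} (hq0 : 0 < q) (hq1 : q < 1) (z : ℝ) :
    (theta2 z q : ℂ) = ((q ^ ((1 : ℝ) / 4) * (2 * Real.cos z) : ℝ) : ℂ) *
      triple (-Complex.exp (-(2 * z * Complex.I))) ((q : ℂ) ^ 2) := by
  set x : ℂ := (q : ℂ) ^ 2 with hxd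
  set w : ℂ := -Complex.exp (-(2 * z * Complex.I)) with hwd
  have hx0 : x ≠ 0 := pow_ne_zero _ (by exact_mod_cast hq0.ne')
  have hx : ‖x‖ < 1 := norm_pow_lt (by rw [Complex.norm_real, Real.norm_of_nonneg hq0.le]; exact hq1)
    two_ne_zero
  have hw : w ≠ 0 := neg_ne_zero.mpr (Complex.exp_ne_zero _)
  have hs := thS_summable hx0 hx hw
  have hs1 := ((Equiv.addRight (1 : ℤ)).summable_iff).mpr hs
  have cos2 : ∀ t : ℂ, 2 * Complex.cos t = Complex.exp (t * Complex.I) + Complex.exp (-(t * Complex.I)) := by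
    intro t; rw [Complex.two_cos, neg_mul]
  have hfold : thS x w = ∑' n : ℕ, Complex.exp (-(z * Complex.I)) *
      (2 * (x ^ tri ((n : ℤ) + 1) * Complex.cos ((2 * n + 1) * z))) := by
    rw [thS, ← (Equiv.addRight (1 : ℤ)).tsum_eq]
    have i1 : Summable fun n : ℕ => ((fun n : ℤ => (-1 : ℂ) ^ n * x ^ tri n * w ^ n) ∘
      (Equiv.addRight (1 : ℤ))) n := hs1.comp_injective Nat.cast_injective
    have i2 : Summable fun n : ℕ => ((fun n : ℤ => (-1 : ℂ) ^ n * x ^ tri n * w ^ n) ∘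
      (Equiv.addRight (1 : ℤ))) (-((n : ℤ) + 1)) := hs1.comp_injective
        (i := fun n : ℕ => -((n : ℤ) + 1)) (fun a b hab => by simpa using hab)
    refine (tsum_of_nat_of_neg_add_one i1 i2).trans ?_
    rw [← i1.tsum_add i2]
    refine tsum_congr fun n => ?_
    simp only [Function.comp, Equiv.coe_addRight, neg_add_rev]
    have e1 : ∀ m : ℤ, (-1 : ℂ) ^ m * x ^ tri m * w ^ m =
        x ^ tri m * Complex.exp (-(2 * m * z * Complex.I)) := by
      intro m
      have : (-1 : ℂ) ^ m * w ^ m = Complex.exp (-(2 * m * z * Complex.I)) := by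
        rw [← mul_zpow, hwd, neg_one_mul, neg_neg, ← Complex.exp_int_mul]
        congr 1
        ring
      rw [← this]; ring
    have t1 : tri (-1 + -(n : ℤ) + 1) = tri ((n : ℤ) + 1) := by
      rw [show -1 + -(n : ℤ) + 1 = -n by ring, tri_neg, tri_add_one]
    rw [e1, e1, t1]
    rw [show ∀ a b c : ℂ, a * (2 * (b * c)) = b * (a * (2 * c)) by intros; ring, cos2, mul_add,
      ← Complex.exp_add, ← Complex.exp_add]
    rw [← mul_add, add_comm (Complex.exp _)]
    push_cast
    congr 3 <;> ring
  have h1w : 1 - w = Complex.exp (-(z * Complex.I)) * (2 * Complex.cos z) := by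
    rw [cos2, mul_add, ← Complex.exp_add, ← Complex.exp_add, hwd]
    rw [show -((z : ℂ) * Complex.I) + z * Complex.I = 0 by ring, Complex.exp_zero, sub_neg_eq_add]
    congr 2
    ring
  have hth : (theta2 z q : ℂ) = ((q ^ ((1 : ℝ) / 4) : ℝ) : ℂ) * (Complex.exp (z * Complex.I) * thS x w) := by
    rw [hfold, ← tsum_mul_left, ← tsum_mul_left, theta2, Complex.ofReal_mul, Complex.ofReal_tsum,
      ← tsum_mul_left]
    refine tsum_congr fun n => ?_
    rw [rpow_sq_half hq0, Complex.exp_neg]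
    have := Complex.exp_ne_zero (z * Complex.I)
    push_cast
    rw [← hxd]
    field_simp
  rw [hth, thS_eq_triple hx0 hx hw, h1w, Complex.exp_neg]
  have := Complex.exp_ne_zero (z * Complex.I)
  push_cast
  field_simp

/-! ### The Rogers–Ramanujan continued fraction -/

/-- For real parameters the real infinite product converges, and its value is the complex one. -/
lemma qp_real (a : ℝ) {x : ℝ} (hx0 : 0 < x) (hx : x < 1) :
    ∃ p : ℝ, HasProd (fun n : ℕ => 1 - a * x ^ n) p ∧ (p : ℂ) = qp a x := by
  have hs : Summable (fun n : ℕ => -(a * x ^ n)) :=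
    ((summable_geometric_of_lt_one hx0.le hx).mul_left a).neg
  have h := (Real.multipliable_one_add_of_summable hs).hasProd
  refine ⟨_, by simpa only [sub_eq_add_neg] using h, ?_⟩
  have h2 := h.map Complex.ofRealHom Complex.continuous_ofReal
  have hx' : ‖(x : ℂ)‖ < 1 := by rw [Complex.norm_real, Real.norm_of_nonneg hx0.le]; exact hx
  refine h2.unique ?_
  convert qp_hasProd a hx' using 1
  funext n
  simp [sub_eq_add_neg]

/-- The identity `R(x)⁵ = x B(x)⁵ / A(x)⁵`, free of fractional powers and of division. -/
lemma rrcf_pow_five {x : ℝ} (hx0 : 0 < x) (hx : x < 1) :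
    ((rrcf x : ℂ)) ^ 5 * rrA x ^ 5 = x * rrB x ^ 5 := by
  have hY0 : 0 < x ^ 5 := by positivity
  have hY : x ^ 5 < 1 := pow_lt_one₀ hx0.le hx (by norm_num)
  have hx' : ‖(x : ℂ)‖ < 1 := by rw [Complex.norm_real, Real.norm_of_nonneg hx0.le]; exact hx
  obtain ⟨p1, h1, c1⟩ := qp_real x hY0 hY
  obtain ⟨p2, h2, c2⟩ := qp_real (x ^ 2) hY0 hY
  obtain ⟨p3, h3, c3⟩ := qp_real (x ^ 3) hY0 hY
  obtain ⟨p4, h4, c4⟩ := qp_real (x ^ 4) hY0 hY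
  push_cast at c1 c2 c3 c4
  have hY' : ‖(x : ℂ) ^ 5‖ < 1 := norm_pow_lt hx' (by norm_num)
  have n2 : qp ((x : ℂ) ^ 2) (x ^ 5) ≠ 0 := qp_ne_zero (norm_pow_lt hx' (by norm_num)) hY'
  have n3 : qp ((x : ℂ) ^ 3) (x ^ 5) ≠ 0 := qp_ne_zero (norm_pow_lt hx' (by norm_num)) hY'
  have m2 : p2 ≠ 0 := by rw [← c2] at n2; exact_mod_cast n2
  have m3 : p3 ≠ 0 := by rw [← c3] at n3; exact_mod_cast n3
  have hP : HasProd (fun n : ℕ => (1 - x ^ (5 * (n + 1) - 1)) * (1 - x ^ (5 * (n + 1) - 4)) /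
      ((1 - x ^ (5 * (n + 1) - 2)) * (1 - x ^ (5 * (n + 1) - 3)))) (p4 * p1 / (p3 * p2)) := by
    have := Tendsto.div (h4.mul h1) (h3.mul h2) (mul_ne_zero m3 m2)
    refine this.congr fun s => ?_
    simp only [Pi.div_apply]
    rw [← Finset.prod_div_distrib]
    refine Finset.prod_congr rfl fun n _ => ?_
    rw [show 5 * (n + 1) - 1 = 4 + 5 * n by omega, show 5 * (n + 1) - 4 = 1 + 5 * n by omega,
      show 5 * (n + 1) - 2 = 3 + 5 * n by omega, show 5 * (n + 1) - 3 = 2 + 5 * n by omega]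
    simp only [pow_add, pow_mul, pow_one]
  have hr : rrcf x = x ^ ((1 : ℝ) / 5) * (p4 * p1 / (p3 * p2)) := by
    rw [rrcf, hP.tprod_eq]
  have h15 : (x ^ ((1 : ℝ) / 5)) ^ 5 = x := by
    rw [← Real.rpow_natCast, ← Real.rpow_mul hx0.le]; norm_num
  have h15' : ((x ^ ((1 : ℝ) / 5) : ℝ) : ℂ) ^ 5 = x := by exact_mod_cast h15
  rw [hr, Complex.ofReal_mul, mul_pow, h15', rrA, rrB]
  push_cast
  rw [c1, c2, c3, c4]
  field_simp

/-- The central identity: `1 - c⁵ R(x)⁵` is, up to a factor independent of `w`, the fifth power of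
`triple w x`. It is `triple_pow_five` for `y = x^(1/5)`. -/
lemma pow_five_of_angle {x : ℝ} (hx0 : 0 < x) (hx : x < 1) {w : ℂ} (hw1 : w ≠ 1) (hw : w ^ 5 = 1)
    {c : ℂ} (hc : w ^ 2 + w ^ 3 = -c) :
    1 - c ^ 5 * (rrcf x : ℂ) ^ 5 = (rrD x ^ 3 / rrA x ^ 5) * triple w x ^ 5 := by
  have hx' : ‖(x : ℂ)‖ < 1 := by rw [Complex.norm_real, Real.norm_of_nonneg hx0.le]; exact hx
  have hY' : ‖(x : ℂ) ^ 5‖ < 1 := norm_pow_lt hx' (by norm_num)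
  have hA : rrA x ≠ 0 := mul_ne_zero (mul_ne_zero (qp_ne_zero hY' hY')
    (qp_ne_zero (norm_pow_lt hx' (by norm_num)) hY')) (qp_ne_zero (norm_pow_lt hx' (by norm_num)) hY')
  have hω : (1 : ℂ) + Complex.exp (2 * π * Complex.I / 5) + Complex.exp (2 * π * Complex.I / 5) ^ 2 +
      Complex.exp (2 * π * Complex.I / 5) ^ 3 + Complex.exp (2 * π * Complex.I / 5) ^ 4 = 0 := by
    have := (Complex.isPrimitiveRoot_exp 5 (by norm_num)).geom_sum_eq_zero (by norm_num)
    simpa [Finset.sum_range_succ] using this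
  have hy0 : 0 < x ^ ((1 : ℝ) / 5) := Real.rpow_pos_of_pos hx0 _
  have hy1 : x ^ ((1 : ℝ) / 5) < 1 := Real.rpow_lt_one hx0.le hx (by norm_num)
  have h15 : (x ^ ((1 : ℝ) / 5)) ^ 5 = x := by
    rw [← Real.rpow_natCast, ← Real.rpow_mul hx0.le]; norm_num
  have h15' : ((x ^ ((1 : ℝ) / 5) : ℝ) : ℂ) ^ 5 = x := by exact_mod_cast h15
  have h := triple_pow_five hω (y := ((x ^ ((1 : ℝ) / 5) : ℝ) : ℂ)) (by exact_mod_cast hy0.ne')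
    (by rw [Complex.norm_real, Real.norm_of_nonneg hy0.le]; exact hy1) hw1 hw
  rw [h15', hc] at h
  have hr := rrcf_pow_five hx0 hx
  field_simp
  linear_combination h - c ^ 5 * hr

lemma rrD_div_rrA_ne_zero {x : ℝ} (hx0 : 0 < x) (hx : x < 1) :
    rrD x ^ 3 / rrA x ^ 5 ≠ 0 := by
  have hx' : ‖(x : ℂ)‖ < 1 := by rw [Complex.norm_real, Real.norm_of_nonneg hx0.le]; exact hx
  have hY' : ‖(x : ℂ) ^ 5‖ < 1 := norm_pow_lt hx' (by norm_num)
  have h : ∀ n : ℕ, n ≠ 0 → qp ((x : ℂ) ^ n) (x ^ 5) ≠ 0 := fun n hn =>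
    qp_ne_zero (norm_pow_lt hx' hn) hY'
  have h1 : qp (x : ℂ) (x ^ 5) ≠ 0 := qp_ne_zero hx' hY'
  have h2 := h 2 (by norm_num)
  have h3 := h 3 (by norm_num)
  have h4 := h 4 (by norm_num)
  have h5 := h 5 (by norm_num)
  unfold rrD rrA
  positivity

/-! ### The angles `3π/10` and `π/10` -/

/-- Here `-e^(-2iz) = e^(it)` with `t = π - 2z`; it is a fifth root of unity by `hk`, and
`w² + w³ = w² + w⁻² = 2 cos 2t`. It is not `1` because `c ≠ -2`. -/
lemma angle_facts {z c : ℝ} (k : ℕ) (hk : 5 * (π - 2 * z) = k * (2 * π))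
    (hc : 2 * Real.cos (2 * (π - 2 * z)) = -c) (hc2 : -2 < c) :
    -Complex.exp (-(2 * z * Complex.I)) ≠ 1 ∧
    (-Complex.exp (-(2 * z * Complex.I))) ^ 5 = 1 ∧
    (-Complex.exp (-(2 * z * Complex.I))) ^ 2 + (-Complex.exp (-(2 * z * Complex.I))) ^ 3 = -(c : ℂ) := by
  have hw : -Complex.exp (-(2 * z * Complex.I)) = Complex.exp (((π - 2 * z : ℝ) : ℂ) * Complex.I) := by
    rw [neg_eq_neg_one_mul, ← Complex.exp_pi_mul_I, ← Complex.exp_add]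
    congr 1
    push_cast
    ring
  rw [hw]
  set t : ℝ := π - 2 * z
  have hkc : (5 : ℂ) * t = k * (2 * π) := by exact_mod_cast hk
  have e5 : Complex.exp ((t : ℂ) * Complex.I) ^ 5 = 1 := by
    rw [← Complex.exp_nat_mul, ← Complex.exp_nat_mul_two_pi_mul_I k]
    congr 1
    push_cast
    linear_combination Complex.I * hkc
  have e23 : Complex.exp ((t : ℂ) * Complex.I) ^ 2 + Complex.exp ((t : ℂ) * Complex.I) ^ 3 = -(c : ℂ) := by
    have hcc : 2 * Complex.cos (2 * t) = -(c : ℂ) := by exact_mod_cast hc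
    have hne := Complex.exp_ne_zero ((t : ℂ) * Complex.I)
    have a2 : Complex.exp (2 * t * Complex.I) = Complex.exp ((t : ℂ) * Complex.I) ^ 2 := by
      rw [← Complex.exp_nat_mul]; congr 1; push_cast; ring
    have a3 : Complex.exp (-(2 * t) * Complex.I) = Complex.exp ((t : ℂ) * Complex.I) ^ 3 := by
      rw [neg_mul, Complex.exp_neg, a2]
      field_simp
      linear_combination -e5
    rw [← hcc, Complex.two_cos, a2, a3]
  refine ⟨fun h1 => ?_, e5, e23⟩
  rw [h1] at e23
  have : (2 : ℝ) = -c := by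
    have : ((2 : ℝ) : ℂ) = ((-c : ℝ) : ℂ) := by push_cast; rw [← e23]; norm_num
    exact_mod_cast this
  linarith

theorem theta2_fifth_ratio_rrcf (q : ℝ) (hq0 : 0 < q) (hq1 : q < 1) :
    (theta2 (3 * Real.pi / 10) q / theta2 (Real.pi / 10) q)^5 =
      (-alphaRR^5) *
        ((1 - betaRR^5 * (rrcf (q^2))^5) / (1 - alphaRR^5 * (rrcf (q^2))^5)) := by
  have hx0 : 0 < q ^ 2 := by positivity
  have hx1 : q ^ 2 < 1 := pow_lt_one₀ hq0.le hq1 two_ne_zero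
  have s5 : √5 ^ 2 = 5 := Real.sq_sqrt (by norm_num)
  have s5' : 0 ≤ √5 := Real.sqrt_nonneg 5
  have hcos : Real.cos (2 * (π / 10)) = (1 + √5) / 4 := by
    rw [show 2 * (π / 10) = π / 5 by ring, Real.cos_pi_div_five]
  obtain ⟨b1, b2, b3⟩ := angle_facts (z := 3 * π / 10) (c := betaRR) 1 (by push_cast; ring)
    (by
      rw [show 2 * (π - 2 * (3 * π / 10)) = π - π / 5 by ring, Real.cos_pi_sub,
        Real.cos_pi_div_five, betaRR]
      ring) (by unfold betaRR; linarith)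
  obtain ⟨a1, a2, a3⟩ := angle_facts (z := π / 10) (c := alphaRR) 2 (by push_cast; ring)
    (by
      rw [show 2 * (π - 2 * (π / 10)) = 2 * π - 2 * (π / 5) by ring, Real.cos_two_pi_sub,
        Real.cos_two_mul, Real.cos_pi_div_five, alphaRR]
      linear_combination s5 / 4) (by unfold alphaRR; nlinarith)
  have hB := pow_five_of_angle hx0 hx1 b1 b2 b3
  have hA := pow_five_of_angle hx0 hx1 a1 a2 a3
  have hM := rrD_div_rrA_ne_zero hx0 hx1
  have tB := theta2_eq hq0 hq1 (3 * π / 10)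
  have tA := theta2_eq hq0 hq1 (π / 10)
  have hc1 : Real.cos (π / 10) ≠ 0 :=
    (Real.cos_pos_of_mem_Ioo ⟨by linarith [Real.pi_pos], by linarith [Real.pi_pos]⟩).ne'
  have hc3 : Real.cos (3 * π / 10) = -alphaRR * Real.cos (π / 10) := by
    rw [show 3 * π / 10 = 3 * (π / 10) by ring, Real.cos_three_mul]
    -- `cos 3u = cos u (2 cos 2u - 1)` and `2 cos (π/5) - 1 = -α`.
    rw [Real.cos_two_mul] at hcos
    unfold alphaRR
    linear_combination 2 * Real.cos (π / 10) * hcos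
  have hq4 : q ^ ((1 : ℝ) / 4) ≠ 0 := (Real.rpow_pos_of_pos hq0 _).ne'
  rw [hc3] at tB
  have hq4' : ((q ^ ((1 : ℝ) / 4) : ℝ) : ℂ) ≠ 0 := by exact_mod_cast hq4
  have hc1' : ((Real.cos (π / 10) : ℝ) : ℂ) ≠ 0 := by exact_mod_cast hc1
  have goal : (((theta2 (3 * Real.pi / 10) q / theta2 (Real.pi / 10) q)^5 : ℝ) : ℂ) =
      (((-alphaRR^5) *
        ((1 - betaRR^5 * (rrcf (q^2))^5) / (1 - alphaRR^5 * (rrcf (q^2))^5)) : ℝ) : ℂ) := by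
    rw [Complex.ofReal_pow, Complex.ofReal_div, tB, tA]
    simp only [Complex.ofReal_mul, Complex.ofReal_div, Complex.ofReal_sub, Complex.ofReal_neg,
      Complex.ofReal_pow, Complex.ofReal_one, Complex.ofReal_ofNat] at hA hB hM ⊢
    rw [hA, hB, mul_div_mul_left _ _ hM]
    rw [show ∀ a b c G : ℂ, a * (2 * (-b * c)) * G = a * (2 * c) * (-b * G) by intros; ring,
      mul_div_mul_left _ _ (mul_ne_zero hq4' (mul_ne_zero two_ne_zero hc1')), div_pow, mul_pow]
    ring
  exact_mod_cast goal
end
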